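/- In the DaC model on the square lattice with p < 1/2 and r > r_c(p), the number of infinite black r-clusters is ℙ_{p,r}-almost surely equal to 1. -/

import Mathlib

/-!
Common definitions for the Divide-and-Colour (DaC) model of
Bálint, Camia and Meester, "Sharp phase transition and critical
behaviour in 2D divide and colour models".

The model is built concretely: a single uniform random variable on `(0,1]`
is decomposed into countably many i.i.d. uniform random variables (via its
binary digits); one family of uniforms drives the Bernoulli(p) bond
percolation (the edge configuration), and an independent family of uniforms
attaches an independent Bernoulli(r) colour to each bond cluster (the colour
of a cluster is determined by the uniform label of its canonical
representative, the vertex of minimal encoding).  The DaC measure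
`ℙ_{p,r}` is the pushforward of Lebesgue measure on `(0,1]` under the map
producing the pair (edge configuration, colour configuration).
-/

open MeasureTheory ENNReal

namespace DaC

/-- Vertices of the lattice. -/
abbrev V : Type := ℤ × ℤ

/-- Square lattice adjacency: Euclidean distance `1`. -/
def SqAdj (u v : V) : Prop := (u.1 - v.1) ^ 2 + (u.2 - v.2) ^ 2 = 1

/-- `*`-adjacency (matching graph of the square lattice):
Euclidean distance `1` or `√2`. -/
def StarAdj (u v : V) : Prop :=
  (u.1 - v.1) ^ 2 + (u.2 - v.2) ^ 2 = 1 ∨ (u.1 - v.1) ^ 2 + (u.2 - v.2) ^ 2 = 2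

/-- Triangular lattice adjacency. -/
def TriAdj (u v : V) : Prop :=
  (u.1 - v.1, u.2 - v.2) ∈
    ({(1, 0), (-1, 0), (0, 1), (0, -1), (1, 1), (-1, -1)} : Set (ℤ × ℤ))

/-- Classical indicator of a proposition, as a boolean. -/
noncomputable def boolOf (P : Prop) : Bool := @decide P (Classical.propDecidable P)

/-- The `n`-th binary digit of a real number `x ∈ (0,1]`. -/
noncomputable def bit (n : ℕ) (x : ℝ) : Bool := boolOf (⌊x * 2 ^ (n + 1)⌋ % 2 = 1)

/-- A countable family of i.i.d. uniform random variables on `[0,1]`, extracted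
from a single uniform sample `x` by splitting its binary digits. -/
noncomputable def unif (i : ℕ) (x : ℝ) : ℝ :=
  ∑' k : ℕ, if bit (Nat.pair i k) x then ((2 : ℝ)⁻¹) ^ (k + 1) else 0

/-- A symmetric encoding of (unordered) pairs of vertices. -/
noncomputable def eIdx (u v : V) : ℕ :=
  min (Encodable.encode (u, v)) (Encodable.encode (v, u))

/-- The uniform label attached to the edge `{u,v}`. -/
noncomputable def edgeU (u v : V) (x : ℝ) : ℝ := unif (2 * eIdx u v) x

/-- The uniform label attached to the vertex `v` (independent of the edge labels). -/
noncomputable def vtxU (v : V) (x : ℝ) : ℝ := unif (2 * Encodable.encode v + 1) x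

/-- Edge configurations: a boolean (open/closed) for each (ordered) pair of
vertices; configurations arising from the model are symmetric and are
supported on pairs of adjacent vertices. -/
abbrev EdgeCfg : Type := V → V → Bool

/-- Colour configurations: a colour (black = `true`, white = `false`) for each vertex. -/
abbrev ColourCfg : Type := V → Bool

/-- Full configurations of the DaC model: an edge configuration together with
a colour configuration. -/
abbrev Config : Type := EdgeCfg × ColourCfg

/-- The Bernoulli(p) edge configuration determined by the uniform sample `x`,
on the lattice with adjacency `adj`: an edge `{u,v}` of the lattice is open
iff its uniform label is `< p`. -/
noncomputable def edgeCfg (adj : V → V → Prop) (p : ℝ) (x : ℝ) : EdgeCfg :=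
  fun u v => boolOf (adj u v) && boolOf (edgeU u v x < p)

/-- Connectivity through open edges of the edge configuration `η`. -/
def Conn (η : EdgeCfg) (u v : V) : Prop :=
  Relation.ReflTransGen (fun a b => η a b = true) u v

/-- The `p`-cluster of the vertex `v`: its connected component in the graph
retaining only open edges. -/
def pCluster (η : EdgeCfg) (v : V) : Set V := {w | Conn η v w}

/-- Canonical representative of the `p`-cluster of `v`: the vertex of the
cluster with minimal encoding. -/
noncomputable def clusterRep (η : EdgeCfg) (v : V) : V :=
  (Encodable.decode (α := V) (sInf (Encodable.encode '' pCluster η v))).getD v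

/-- The colour configuration with parameters `p, r` determined by the uniform
sample `x`: every `p`-cluster is coloured black (with probability `r`)
or white, independently of all other `p`-clusters, according to the uniform
label of its canonical representative. -/
noncomputable def colourCfg (adj : V → V → Prop) (p r : ℝ) (x : ℝ) : ColourCfg :=
  fun v => boolOf (vtxU (clusterRep (edgeCfg adj p x) v) x < r)

/-- The uniform sample: Lebesgue measure on `(0,1]`. -/
noncomputable def base : Measure ℝ := volume.restrict (Set.Ioc 0 1)

/-- `ν_p`: the product Bernoulli(p) measure on edge configurations of the
lattice with adjacency `adj`. -/
noncomputable def edgeMeasure (adj : V → V → Prop) (p : ℝ) : Measure EdgeCfg :=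
  base.map (edgeCfg adj p)

/-- `ℙ_{p,r}`: the DaC measure on pairs (edge configuration, colour
configuration) for the lattice with adjacency `adj`. -/
noncomputable def DaCMeasure (adj : V → V → Prop) (p r : ℝ) : Measure Config :=
  base.map (fun x => (edgeCfg adj p x, colourCfg adj p r x))

/-- Monochromatic connectivity: `u` and `v` are joined by a path (for the
adjacency `adj`) all of whose vertices have colour `c`. -/
def MonoConn (adj : V → V → Prop) (ξ : ColourCfg) (c : Bool) (u v : V) : Prop :=
  Relation.ReflTransGen (fun a b => adj a b ∧ ξ a = c ∧ ξ b = c) u v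

/-- The colour-`c` cluster of `v` (for the adjacency `adj`): empty if `v` does
not have colour `c`, and otherwise the maximal `adj`-connected set of
`c`-coloured vertices containing `v`. -/
def monoCluster (adj : V → V → Prop) (ξ : ColourCfg) (c : Bool) (v : V) : Set V :=
  {w | ξ v = c ∧ MonoConn adj ξ c v w}

/-- The origin. -/
def origin : V := (0, 0)

/-- The size (cardinality) of a set of vertices, with values in `ℝ≥0∞`. -/
noncomputable def sizeE (S : Set V) : ℝ≥0∞ := S.encard

/-- The probability, under the DaC measure with edge adjacency `eadj` and
parameters `p, r`, that the origin lies in an infinite colour-`c` cluster for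
the adjacency `cadj`. -/
noncomputable def percProb (eadj cadj : V → V → Prop) (c : Bool) (p r : ℝ) : ℝ≥0∞ :=
  DaCMeasure eadj p r {ω | (monoCluster cadj ω.2 c origin).Infinite}

/-- `Θ(p,r)` for the square lattice: probability that the origin lies in an
infinite black `r`-cluster. -/
noncomputable def thetaSq (p r : ℝ) : ℝ≥0∞ := percProb SqAdj SqAdj true p r

/-- `Θ*(p,s)` for the square lattice: the `ℙ_{p,1-s}`-probability that the
origin lies in an infinite white `*`-cluster. -/
noncomputable def thetaStarSq (p s : ℝ) : ℝ≥0∞ := percProb SqAdj StarAdj false p (1 - s)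

/-- `Θ(p,r)` for the triangular lattice. -/
noncomputable def thetaTri (p r : ℝ) : ℝ≥0∞ := percProb TriAdj TriAdj true p r

/-- The critical colouring density `r_c(p)` of the square lattice DaC model. -/
noncomputable def rcSq (p : ℝ) : ℝ :=
  sSup {r : ℝ | r ∈ Set.Icc (0 : ℝ) 1 ∧ thetaSq p r = 0}

/-- The critical colouring density `r_c*(p)` for white `*`-percolation. -/
noncomputable def rcStarSq (p : ℝ) : ℝ :=
  sSup {s : ℝ | s ∈ Set.Icc (0 : ℝ) 1 ∧ thetaStarSq p s = 0}

/-- The critical colouring density `r_c(p)` of the triangular lattice DaC model. -/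
noncomputable def rcTri (p : ℝ) : ℝ :=
  sSup {r : ℝ | r ∈ Set.Icc (0 : ℝ) 1 ∧ thetaTri p r = 0}

/-! ### Rectangles and crossings -/

/-- The rectangle `S_{n,m} = ([0,n] × [0,m]) ∩ ℤ²`. -/
def Rect (n m : ℕ) : Set V :=
  {v | 0 ≤ v.1 ∧ v.1 ≤ (n : ℤ) ∧ 0 ≤ v.2 ∧ v.2 ≤ (m : ℤ)}

/-- The top side of `S_{n,m}`. -/
def TopSide (n m : ℕ) : Set V := {v | v ∈ Rect n m ∧ v.2 = (m : ℤ)}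

/-- The bottom side of `S_{n,m}`. -/
def BotSide (n m : ℕ) : Set V := {v | v ∈ Rect n m ∧ v.2 = 0}

/-- The left side of `S_{n,m}`. -/
def LeftSide (n m : ℕ) : Set V := {v | v ∈ Rect n m ∧ v.1 = 0}

/-- The right side of `S_{n,m}`. -/
def RightSide (n m : ℕ) : Set V := {v | v ∈ Rect n m ∧ v.1 = (n : ℤ)}

/-- There is a path (for the adjacency `adj`), all of whose vertices lie in the
region `R` and satisfy the predicate `good`, from the set `A` to the set `B`. -/
def HasCrossing (adj : V → V → Prop) (good : V → Prop) (R A B : Set V) : Prop :=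
  ∃ (k : ℕ) (f : Fin (k + 1) → V),
    (∀ i, f i ∈ R ∧ good (f i)) ∧
    (∀ i : Fin k, adj (f i.castSucc) (f i.succ)) ∧
    f 0 ∈ A ∧ f (Fin.last k) ∈ B

/-- `V^b_{n,m}` as a set of colour configurations: there is a black vertical
crossing of `S_{n,m}` (for the adjacency `adj`). -/
def VertBC (adj : V → V → Prop) (n m : ℕ) : Set ColourCfg :=
  {ξ | HasCrossing adj (fun v => ξ v = true) (Rect n m) (TopSide n m) (BotSide n m)}

/-- `V^{w*}_{n,m}` as a set of colour configurations: there is a white vertical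
`*`-crossing of `S_{n,m}`. -/
def VertWStarC (n m : ℕ) : Set ColourCfg :=
  {ξ | HasCrossing StarAdj (fun v => ξ v = false) (Rect n m) (TopSide n m) (BotSide n m)}

/-- `H^{w*}_{n,m}` as a set of colour configurations: there is a white
horizontal `*`-crossing of `S_{n,m}`. -/
def HorizWStarC (n m : ℕ) : Set ColourCfg :=
  {ξ | HasCrossing StarAdj (fun v => ξ v = false) (Rect n m) (LeftSide n m) (RightSide n m)}

/-- The event (set of full configurations) determined by a set of colour
configurations. -/
def colourEvent (C : Set ColourCfg) : Set Config := {ω | ω.2 ∈ C}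

/-! ### Events depending on colours, increasing events, pivotal clusters -/

/-- The event `A` is defined in terms of the colours of the vertices in `W`. -/
def DependsOnColoursIn (A : Set Config) (W : Set V) : Prop :=
  ∀ ω ω' : Config, (∀ v ∈ W, ω.2 v = ω'.2 v) → (ω ∈ A ↔ ω' ∈ A)

/-- The event `A` is increasing (for the partial order comparing colour
configurations pointwise, black = `true` above white = `false`). -/
def IncreasingColourEvent (A : Set Config) : Prop :=
  ∀ ω ω' : Config, (∀ v : V, ω.2 v = true → ω'.2 v = true) → ω ∈ A → ω' ∈ A

/-- Flip the colours of the vertices of `C`. -/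
noncomputable def flipOn (C : Set V) (ξ : ColourCfg) : ColourCfg :=
  fun v => @ite _ (v ∈ C) (Classical.propDecidable _) (!ξ v) (ξ v)

/-- The set `C` is a pivotal `p`-cluster for the event `A` in the
configuration `ω`: `C` is a `p`-cluster of the edge configuration of `ω`, and
flipping the colour of (all the vertices of) `C` changes whether the
configuration belongs to `A`. -/
def IsPivotal (A : Set Config) (ω : Config) (C : Set V) : Prop :=
  (∃ v : V, C = pCluster ω.1 v) ∧ ¬ (ω ∈ A ↔ (ω.1, flipOn C ω.2) ∈ A)

/-- `n(A)`: the number of pivotal `p`-clusters for the event `A`, with values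
in `ℝ≥0∞`. -/
noncomputable def numPivotal (A : Set Config) (ω : Config) : ℝ≥0∞ :=
  {C : Set V | IsPivotal A ω C}.encard

/-! ### Barriers -/

/-- Connectivity in the square lattice avoiding the edges of `E`. -/
def AvoidConn (E : Set (V × V)) (u v : V) : Prop :=
  Relation.ReflTransGen (fun a b => SqAdj a b ∧ (a, b) ∉ E ∧ (b, a) ∉ E) u v

/-- `E` is a barrier: a set of edges of the square lattice whose removal
(keeping the end-vertices) separates `ℤ²` into two or more connected
components, exactly one of which is infinite. -/
def IsBarrier (E : Set (V × V)) : Prop :=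
  (∀ e ∈ E, SqAdj e.1 e.2) ∧
  (∃ v, {w | AvoidConn E v w}.Infinite) ∧
  (∀ v w, {x | AvoidConn E v x}.Infinite → {x | AvoidConn E w x}.Infinite → AvoidConn E v w) ∧
  (∃ v, {w | AvoidConn E v w}.Finite)

/-- The exterior of a barrier: its unique infinite complementary component. -/
def barrierExt (E : Set (V × V)) : Set V := {v | {w | AvoidConn E v w}.Infinite}

/-- The interior of a barrier: the union of the finite complementary components. -/
def barrierInt (E : Set (V × V)) : Set V := {v | {w | AvoidConn E v w}.Finite}

/-- The event `A ⊆ EdgeCfg` is increasing (opening edges preserves it). -/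
def IncreasingEdgeEvent (A : Set EdgeCfg) : Prop :=
  ∀ η η' : EdgeCfg, (∀ a b : V, η a b = true → η' a b = true) → η ∈ A → η' ∈ A

/-- The event `A ⊆ EdgeCfg` depends only on the states of the edges both of
whose endpoints lie in `W`. -/
def DependsOnEdgesIn (A : Set EdgeCfg) (W : Set V) : Prop :=
  ∀ η η' : EdgeCfg, (∀ a b : V, a ∈ W → b ∈ W → η a b = η' a b) → (η ∈ A ↔ η' ∈ A)

/-! ### Translations -/

/-- Translation of configurations by the vector `u`. -/
def shift (u : V) (ω : Config) : Config :=
  (fun a b => ω.1 (a + u) (b + u), fun a => ω.2 (a + u))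

end DaC

/-!
For `p ≤ 1 / 2` all clusters of open edges are almost surely finite. By monotonicity it suffices to
treat `p = 1 / 2`, where Zhang's argument applies: if there were an infinite cluster, it would be
almost surely unique, and by the Harris inequality and the square-root trick a large box would be
crossed from left to right by open edges with probability close to one; by self-duality it would
also be crossed from bottom to top by open dual edges, and the two crossings exclude each other.

Since the clusters are finite, the law of the colouring does not depend on which vertex of a cluster
carries its colour. Taking the lexicographically smallest vertex instead of the one with minimal
encoding turns the colouring into a translation covariant function of independent bits. The black
graph is then ergodic, and blackening the finitely many finite clusters that meet a box has
positive conditional probability, so the Burton–Keane argument applies: the number of infinite black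
clusters is almost surely constant; a finite number above one is excluded by merging; and three or
more of them would create trifurcations with positive density, while the trifurcations in a box are
no more numerous than its boundary vertices. Existence follows from `Θ(p, r) ≠ 0` and the zero-one
law.
-/

namespace DaC

section Graphs

variable {α β : Type*} {G G' : SimpleGraph α} {F F' s t : Set α} {a b x y : α}

/-- The graph obtained from `G` by keeping only the edges with both endpoints in `s`. The vertex
type is not changed, so that restrictions to different sets can be compared. -/
def restrict (G : SimpleGraph α) (s : Set α) : SimpleGraph α where
  Adj a b := G.Adj a b ∧ a ∈ s ∧ b ∈ s
  symm := ⟨fun _ _ h => ⟨h.1.symm, h.2.2, h.2.1⟩⟩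
  loopless := ⟨fun _ h => h.1.ne rfl⟩

/-- The connected component of `x`, as a set of vertices. -/
def cluster (G : SimpleGraph α) (x : α) : Set α := {y | G.Reachable x y}

lemma restrict_le : restrict G s ≤ G := fun _ _ h => h.1

lemma restrict_mono (hG : G ≤ G') (h : s ⊆ t) : restrict G s ≤ restrict G' t :=
  fun _ _ hab => ⟨hG hab.1, h hab.2.1, h hab.2.2⟩

lemma cluster_mono (h : G ≤ G') (x : α) : cluster G x ⊆ cluster G' x :=
  fun _ hy => hy.mono h

lemma reachable_of_forall_adj (hab : G.Reachable a b)
    (h : ∀ u v, G.Reachable a u → G.Adj u v → G'.Adj u v) : G'.Reachable a b := by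
  rw [SimpleGraph.reachable_iff_reflTransGen] at hab
  induction hab with
  | refl => exact .rfl
  | tail hu huv ih =>
    exact ih.trans (h _ _ ((SimpleGraph.reachable_iff_reflTransGen _ _).2 hu) huv).reachable

lemma exists_exit (hab : G.Reachable a b) (ha : a ∈ s) (hb : b ∉ s) :
    ∃ u ∈ s, ∃ v ∉ s, (restrict G s).Reachable a u ∧ G.Adj u v := by
  obtain ⟨p⟩ := hab
  induction p with
  | nil => exact absurd ha hb
  | @cons a c b hac _ ih =>
    by_cases hc : c ∈ s
    · obtain ⟨u, hu, v, hv, hcu, huv⟩ := ih hc hb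
      exact ⟨u, hu, v, hv, .trans (SimpleGraph.Adj.reachable ⟨hac, ha, hc⟩) hcu, huv⟩
    · exact ⟨a, ha, c, hc, .rfl, hac⟩

lemma cluster_apply_iso {H : SimpleGraph β} (e : G ≃g H) (x : α) :
    cluster H (e x) = e '' cluster G x := by
  ext y
  obtain ⟨z, rfl⟩ := e.surjective y
  rw [e.injective.mem_set_image]
  exact e.reachable_iff

/-- An isomorphism of graphs restricts to an isomorphism from the part over `s` to the part over
the image of `s`. -/
def restrictIso {H : SimpleGraph β} (e : G ≃g H) (s : Set α) :
    restrict G s ≃g restrict H (e '' s) where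
  toEquiv := e.toEquiv
  map_rel_iff' {a b} := by
    change H.Adj (e a) (e b) ∧ e a ∈ e '' s ∧ e b ∈ e '' s ↔ _
    rw [e.injective.mem_set_image, e.injective.mem_set_image, e.map_adj_iff]
    rfl

/-- `F` is a connected set of vertices of `G`, and the `x i` are three neighbours of `F` that lie in
different components of `G` once `F` is removed. -/
structure IsTripod (G : SimpleGraph α) (F : Set α) (x : Fin 3 → α) : Prop where
  connected : ∀ a ∈ F, ∀ b ∈ F, (restrict G F).Reachable a b
  notMem : ∀ i, x i ∉ F
  exists_adj : ∀ i, ∃ f ∈ F, G.Adj (x i) f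
  separated : ∀ i j, i ≠ j → ¬ (restrict G Fᶜ).Reachable (x i) (x j)

/-- A tripod with three infinite legs: the coarse version of the encounter points of Burton and
Keane, in which a finite set `F` replaces a single vertex. -/
structure IsTrifurcation (G : SimpleGraph α) (F : Set α) (x : Fin 3 → α) : Prop
    extends IsTripod G F x where
  infinite : ∀ i, (cluster (restrict G Fᶜ) (x i)).Infinite

lemma IsTrifurcation.map_iso {H : SimpleGraph β} (e : G ≃g H) {x : Fin 3 → α}
    (h : IsTrifurcation G F x) : IsTrifurcation H (e '' F) (e ∘ x) := by
  have hcompl : (e '' F)ᶜ = e '' Fᶜ := (Set.image_compl_eq e.bijective).symm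
  refine ⟨⟨?_, fun i => ?_, fun i => ?_, fun i j hij => ?_⟩, fun i => ?_⟩
  · rintro _ ⟨a, ha, rfl⟩ _ ⟨b, hb, rfl⟩
    exact (restrictIso e F).reachable_iff.2 (h.connected a ha b hb)
  · exact e.injective.mem_set_image.not.2 (h.notMem i)
  · obtain ⟨f, hf, hxf⟩ := h.exists_adj i
    exact ⟨e f, Set.mem_image_of_mem e hf, e.map_adj_iff.2 hxf⟩
  · rw [hcompl]
    exact (restrictIso e Fᶜ).reachable_iff.not.2 (h.separated i j hij)
  · rw [hcompl]
    exact cluster_apply_iso (restrictIso e Fᶜ) (x i) ▸ (h.infinite i).image e.injective.injOn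

lemma exists_infinite_branch (hF : F.Finite) (hG : ∀ f ∈ F, (G.neighborSet f).Finite)
    (hx : (cluster G x).Infinite) (hxF : ∃ f ∈ F, G.Reachable x f) :
    ∃ y ∉ F, G.Reachable x y ∧ (∃ f ∈ F, G.Adj y f) ∧ (cluster (restrict G Fᶜ) y).Infinite := by
  by_contra! hfinite
  obtain ⟨f, hf, hxf⟩ := hxF
  let boundary : Set α := {y | y ∉ F ∧ G.Reachable x y ∧ ∃ f ∈ F, G.Adj y f}
  have hboundary : boundary.Finite :=
    (hF.biUnion hG).subset fun y ⟨_, _, f, hf, hyf⟩ => Set.mem_biUnion hf hyf.symm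
  have hunion : (F ∪ ⋃ y ∈ boundary, cluster (restrict G Fᶜ) y).Finite :=
    hF.union (hboundary.biUnion fun y hy => hfinite y hy.1 hy.2.1 hy.2.2)
  refine hx (hunion.subset fun z hz => ?_)
  by_cases hzF : z ∈ F
  · exact Or.inl hzF
  · obtain ⟨y, hy, g, hg, hzy, hyg⟩ :=
      exists_exit (s := Fᶜ) ((SimpleGraph.Reachable.symm hz).trans hxf) hzF (not_not.2 hf)
    exact Or.inr (Set.mem_biUnion (x := y)
      ⟨hy, SimpleGraph.Reachable.trans hz (hzy.mono restrict_le), g, not_not.1 hg, hyg⟩ hzy.symm)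

/-- `G'` arises from `G` by adding edges that touch `F`, in such a way that `F` becomes
connected. -/
structure IsMerging (G G' : SimpleGraph α) (F : Set α) : Prop where
  le : G ≤ G'
  restrict_compl_le : restrict G' Fᶜ ≤ G
  connected : ∀ a ∈ F, ∀ b ∈ F, (restrict G' F).Reachable a b

lemma IsMerging.exists_mem_reachable (hm : IsMerging G G' F)
    (h : ∀ x, (cluster G x).Infinite → ∃ f ∈ F, G.Reachable x f)
    (hx : (cluster G' x).Infinite) : ∃ f ∈ F, G'.Reachable x f := by
  by_contra! hxF
  have hsub : cluster G' x ⊆ cluster G x := fun z hz =>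
    reachable_of_forall_adj hz fun u v hxu huv => hm.restrict_compl_le
      ⟨huv, fun hu => hxF u hu hxu, fun hv => hxF v hv (hxu.trans huv.reachable)⟩
  obtain ⟨f, hf, hxf⟩ := h x (hx.mono hsub)
  exact hxF f hf (hxf.mono hm.le)

lemma IsMerging.reachable_of_infinite (hm : IsMerging G G' F)
    (h : ∀ x, (cluster G x).Infinite → ∃ f ∈ F, G.Reachable x f)
    (hx : (cluster G' x).Infinite) (hy : (cluster G' y).Infinite) : G'.Reachable x y := by
  obtain ⟨f, hf, hxf⟩ := hm.exists_mem_reachable h hx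
  obtain ⟨g, hg, hyg⟩ := hm.exists_mem_reachable h hy
  exact hxf.trans (((hm.connected f hf g hg).mono restrict_le).trans hyg.symm)

lemma IsMerging.exists_isTrifurcation (hm : IsMerging G G' F) (hF : F.Finite)
    (hG : ∀ f ∈ F, (G.neighborSet f).Finite) {x : Fin 3 → α}
    (hx : ∀ i, (cluster G (x i)).Infinite) (hxF : ∀ i, ∃ f ∈ F, G.Reachable (x i) f)
    (hsep : ∀ i j, i ≠ j → ¬ G.Reachable (x i) (x j)) : ∃ y, IsTrifurcation G' F y := by
  choose y hyF hxy hadj hinf using fun i => exists_infinite_branch hF hG (hx i) (hxF i)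
  refine ⟨y, ⟨hm.connected, hyF, fun i => ?_, fun i j hij hyy => hsep i j hij ?_⟩, fun i => ?_⟩
  · obtain ⟨f, hf, hyf⟩ := hadj i
    exact ⟨f, hf, hm.le hyf⟩
  · exact (hxy i).trans ((hyy.mono hm.restrict_compl_le).trans (hxy j).symm)
  · exact (hinf i).mono (cluster_mono (restrict_mono hm.le subset_rfl) _)

lemma cluster_subset_of_not_reachable (hd : Disjoint F F')
    (hF : ∀ a ∈ F, ∀ b ∈ F, (restrict G F).Reachable a b)
    (hF' : ∀ a ∈ F', ∀ b ∈ F', (restrict G F').Reachable a b)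
    {f f' : α} (hf : f ∈ F) (hf' : f' ∈ F') (hxF : ∃ g ∈ F, G.Adj x g)
    (hxf' : ¬ (restrict G Fᶜ).Reachable f' x) :
    cluster (restrict G Fᶜ) x ⊆ cluster (restrict G F'ᶜ) f := by
  have havoid : ∀ u, (restrict G Fᶜ).Reachable x u → u ∉ F' := fun u hxu hu =>
    hxf' (((hF' f' hf' u hu).mono (restrict_mono le_rfl hd.subset_compl_left)).trans hxu.symm)
  intro z hxz
  obtain ⟨g, hg, hxg⟩ := hxF
  have hfg : (restrict G F'ᶜ).Reachable f g :=
    (hF f hf g hg).mono (restrict_mono le_rfl hd.subset_compl_right)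
  have hgx : (restrict G F'ᶜ).Adj g x :=
    ⟨hxg.symm, Set.disjoint_left.1 hd hg, havoid x .rfl⟩
  have hxz' : (restrict G F'ᶜ).Reachable x z :=
    reachable_of_forall_adj hxz fun u v hxu huv =>
      ⟨huv.1, havoid u hxu, havoid v (hxu.trans huv.reachable)⟩
  exact hfg.trans (hgx.reachable.trans hxz')

/-- Map `i` to the least of the maxima of the legs `L i u`, for an arbitrary linear order: the
hypothesis makes this map injective. -/
lemma card_le_card_of_nested_legs {ι κ : Type*} [Finite κ] [Nonempty κ] (I : Finset ι)
    (Y : Finset α) (L : ι → κ → Finset α) (hne : ∀ i ∈ I, ∀ u, (L i u).Nonempty)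
    (hsub : ∀ i ∈ I, ∀ u, L i u ⊆ Y)
    (hdisj : ∀ i ∈ I, ∀ u v, u ≠ v → Disjoint (L i u) (L i v))
    (hnested : ∀ i ∈ I, ∀ j ∈ I, i ≠ j → ∀ u v, ¬ Disjoint (L i u) (L j v) →
      (∃ w ≠ v, L j w ⊆ L i u) ∨ ∃ w ≠ u, L i w ⊆ L j v) : I.card ≤ Y.card := by
  classical
  let _ : LinearOrder α := linearOrderOfSTO WellOrderingRel
  have hmin : ∀ i ∈ I, ∃ u, ∃ y ∈ L i u, (∀ z ∈ L i u, z ≤ y) ∧ ∀ w, ∃ z ∈ L i w, y ≤ z := by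
    intro i hi
    obtain ⟨u, hu⟩ := Finite.exists_min fun u => (L i u).max' (hne i hi u)
    exact ⟨u, _, (L i u).max'_mem _, fun z => (L i u).le_max' z,
      fun w => ⟨_, (L i w).max'_mem (hne i hi w), hu w⟩⟩
  obtain rfl | ⟨i₀, hi₀⟩ := I.eq_empty_or_nonempty
  · exact Nat.zero_le _
  have : Nonempty α := ⟨(hmin i₀ hi₀).choose_spec.choose⟩
  choose! u y hy hmax hmin using hmin
  have hno : ∀ i ∈ I, ∀ j ∈ I, y i = y j → ∀ w ≠ u j, ¬ L j w ⊆ L i (u i) := by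
    intro i hi j hj hij w hw hsubset
    obtain ⟨z, hz, hyz⟩ := hmin j hj w
    have hzy : z = y j := le_antisymm (hij ▸ hmax i hi z (hsubset hz)) hyz
    exact Finset.disjoint_left.1 (hdisj j hj w (u j) hw) hz (hzy ▸ hy j hj)
  refine Finset.card_le_card_of_injOn y (fun i hi => hsub i hi _ (hy i hi)) ?_
  intro i hi j hj hij
  by_contra hne'
  have hmeet : ¬ Disjoint (L i (u i)) (L j (u j)) := fun hd =>
    Finset.disjoint_left.1 hd (hy i hi) (hij ▸ hy j hj)
  rcases hnested i hi j hj hne' _ _ hmeet with ⟨w, hw, hsubset⟩ | ⟨w, hw, hsubset⟩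
  · exact hno i hi j hj hij w hw hsubset
  · exact hno j hj i hi hij.symm w hw hsubset

lemma IsTripod.exists_ne_not_reachable {x : Fin 3 → α} (h : IsTripod G F x) (v : Fin 3) (a : α) :
    ∃ w ≠ v, ¬ (restrict G Fᶜ).Reachable a (x w) := by
  obtain ⟨w, w', hw, hw', hww⟩ : ∃ w w' : Fin 3, w ≠ v ∧ w' ≠ v ∧ w ≠ w' := by
    revert v; decide
  by_cases haw : (restrict G Fᶜ).Reachable a (x w)
  · exact ⟨w', hw', fun haw' => h.separated w w' hww (haw.symm.trans haw')⟩
  · exact ⟨w, hw, haw⟩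

/-- Let `D` be the component of `Fᶜ` containing `F'` and `D'` the component of `F'ᶜ` containing `F`.
The components of `Fᶜ` other than `D` lie inside `D'`, and vice versa. -/
lemma IsTripod.exists_leg_subset {x x' : Fin 3 → α} (h : IsTripod G F x) (h' : IsTripod G F' x')
    (hd : Disjoint F F') {u v : Fin 3}
    (hmeet : ¬ Disjoint (cluster (restrict G Fᶜ) (x u)) (cluster (restrict G F'ᶜ) (x' v))) :
    (∃ w ≠ v, cluster (restrict G F'ᶜ) (x' w) ⊆ cluster (restrict G Fᶜ) (x u)) ∨
      ∃ w ≠ u, cluster (restrict G Fᶜ) (x w) ⊆ cluster (restrict G F'ᶜ) (x' v) := by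
  obtain ⟨f, hf, -⟩ := h.exists_adj 0
  obtain ⟨f', hf', -⟩ := h'.exists_adj 0
  have hsub : ∀ w, ¬ (restrict G Fᶜ).Reachable f' (x w) →
      cluster (restrict G Fᶜ) (x w) ⊆ cluster (restrict G F'ᶜ) f := fun w =>
    cluster_subset_of_not_reachable hd h.connected h'.connected hf hf'
      (h.exists_adj w)
  have hsub' : ∀ w, ¬ (restrict G F'ᶜ).Reachable f (x' w) →
      cluster (restrict G F'ᶜ) (x' w) ⊆ cluster (restrict G Fᶜ) f' := fun w =>
    cluster_subset_of_not_reachable hd.symm h'.connected h.connected hf' hf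
      (h'.exists_adj w)
  by_cases hu : (restrict G Fᶜ).Reachable f' (x u)
  · obtain ⟨w, hw, hfw⟩ := h'.exists_ne_not_reachable v f
    exact Or.inl ⟨w, hw, fun z hz => hu.symm.trans (hsub' w hfw hz)⟩
  · obtain ⟨z, hzu, hzv⟩ := Set.not_disjoint_iff.1 hmeet
    have hv : (restrict G F'ᶜ).Reachable f (x' v) :=
      SimpleGraph.Reachable.trans (hsub u hu hzu) (SimpleGraph.Reachable.symm hzv)
    obtain ⟨w, hw, hfw⟩ := h.exists_ne_not_reachable u f'
    exact Or.inr ⟨w, hw, fun z hz => hv.symm.trans (hsub w hfw hz)⟩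

lemma card_le_card_of_isTripod {ι : Type*} (I : Finset ι) (Y : Finset α) {F : ι → Set α}
    {x : ι → Fin 3 → α} (htripod : ∀ i ∈ I, IsTripod G (F i) (x i))
    (hdisj : ∀ i ∈ I, ∀ j ∈ I, i ≠ j → Disjoint (F i) (F j))
    (hmeet : ∀ i ∈ I, ∀ u, ∃ y ∈ Y, y ∈ cluster (restrict G (F i)ᶜ) (x i u)) :
    I.card ≤ Y.card := by
  classical
  let leg (i : ι) (u : Fin 3) : Finset α :=
    Y.filter (· ∈ cluster (restrict G (F i)ᶜ) (x i u))
  have mem_leg {i u y} : y ∈ leg i u ↔ y ∈ Y ∧ y ∈ cluster (restrict G (F i)ᶜ) (x i u) :=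
    Finset.mem_filter
  refine card_le_card_of_nested_legs I Y leg (fun i hi u => ?_)
    (fun i _ u => Finset.filter_subset _ _) (fun i hi u v huv => ?_)
    (fun i hi j hj hij u v huv => ?_)
  · obtain ⟨y, hyY, hy⟩ := hmeet i hi u
    exact ⟨y, mem_leg.2 ⟨hyY, hy⟩⟩
  · refine Finset.disjoint_left.2 fun y hu hv => (htripod i hi).separated u v huv ?_
    exact SimpleGraph.Reachable.trans (mem_leg.1 hu).2 (SimpleGraph.Reachable.symm (mem_leg.1 hv).2)
  · obtain ⟨y, hyu, hyv⟩ := Finset.not_disjoint_iff.1 huv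
    refine ((htripod i hi).exists_leg_subset (htripod j hj) (hdisj i hi j hj hij)
      (Set.not_disjoint_iff.2 ⟨y, (mem_leg.1 hyu).2, (mem_leg.1 hyv).2⟩)).imp ?_ ?_
    all_goals exact fun ⟨w, hw, hsub⟩ =>
      ⟨w, hw, fun z hz => mem_leg.2 ⟨(mem_leg.1 hz).1, hsub (mem_leg.1 hz).2⟩⟩

end Graphs

section SquareLattice

variable {G : SimpleGraph V} {a b v : V} {m n : ℕ}

/-- The square lattice as a simple graph. -/
def lattice : SimpleGraph V where
  Adj := SqAdj
  symm := ⟨fun a b h => by unfold SqAdj at h ⊢; linarith⟩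
  loopless := ⟨fun a h => by simp [SqAdj] at h⟩

/-- The unit vector in the horizontal direction. -/
def e1 : V := (1, 0)

/-- The unit vector in the vertical direction. -/
def e2 : V := (0, 1)

lemma sqAdj_iff : SqAdj a b ↔ b = a + e1 ∨ a = b + e1 ∨ b = a + e2 ∨ a = b + e2 := by
  obtain ⟨a₁, a₂⟩ := a
  obtain ⟨b₁, b₂⟩ := b
  simp only [SqAdj, e1, e2, Prod.mk_add_mk, Prod.mk.injEq, add_zero]
  constructor
  · intro h
    have h₁ : -1 ≤ a₁ - b₁ := by nlinarith [sq_nonneg (a₂ - b₂)]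
    have h₁' : a₁ - b₁ ≤ 1 := by nlinarith [sq_nonneg (a₂ - b₂)]
    have h₂ : -1 ≤ a₂ - b₂ := by nlinarith [sq_nonneg (a₁ - b₁)]
    have h₂' : a₂ - b₂ ≤ 1 := by nlinarith [sq_nonneg (a₁ - b₁)]
    generalize hs : a₁ - b₁ = s at *
    generalize ht : a₂ - b₂ = t at *
    interval_cases s <;> interval_cases t <;> omega
  · rintro (⟨rfl, rfl⟩ | ⟨rfl, rfl⟩ | ⟨rfl, rfl⟩ | ⟨rfl, rfl⟩) <;> ring

/-- The square `[-m, m]²`. -/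
noncomputable def box (m : ℕ) : Finset V := Finset.Icc (-m, -m) (m, m)

lemma mem_box : v ∈ box m ↔ (-m ≤ v.1 ∧ v.1 ≤ m) ∧ -m ≤ v.2 ∧ v.2 ≤ m := by
  rw [box, Finset.mem_Icc, Prod.le_def, Prod.le_def]
  tauto

lemma box_mono (h : m ≤ n) : box m ⊆ box n := fun v hv => by
  rw [mem_box] at *
  omega

lemma exists_subset_box (F : Finset V) : ∃ n, F ⊆ box n := by
  refine ⟨F.sup fun v => v.1.natAbs + v.2.natAbs, fun v hv => ?_⟩
  have := Finset.le_sup (f := fun v : V => v.1.natAbs + v.2.natAbs) hv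
  rw [mem_box]
  omega

lemma card_box (m : ℕ) : (box m).card = (2 * m + 1) ^ 2 := by
  rw [box, Finset.card_Icc_prod, Int.card_Icc, sq]
  congr 1 <;> omega

/-- The vertices just outside `box m`, together with the corners of `box (m + 1)`. -/
noncomputable def sphere (m : ℕ) : Finset V := box (m + 1) \ box m

lemma card_sphere (m : ℕ) : (sphere m).card = 8 * m + 8 := by
  rw [sphere, Finset.card_sdiff_of_subset (box_mono (Nat.le_add_right m 1)), card_box, card_box,
    Nat.sub_eq_iff_eq_add (Nat.pow_le_pow_left (by omega) 2)]
  ring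

lemma mem_box_succ_of_adj (hab : lattice.Adj a b) (ha : a ∈ box m) : b ∈ box (m + 1) := by
  rw [mem_box] at *
  push_cast
  rcases sqAdj_iff.1 hab with rfl | rfl | rfl | rfl <;>
    simp only [e1, e2, Prod.fst_add, Prod.snd_add] at * <;> omega

lemma mem_sphere_of_adj (hab : lattice.Adj a b) (ha : a ∈ box m) (hb : b ∉ box m) :
    b ∈ sphere m :=
  Finset.mem_sdiff.2 ⟨mem_box_succ_of_adj hab ha, hb⟩

lemma exists_mem_sphere_reachable (hG : G ≤ lattice) (hab : G.Reachable a b) (ha : a ∈ box m)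
    (hb : b ∉ box m) : ∃ y ∈ sphere m, G.Reachable a y := by
  obtain ⟨u, hu, v, hv, hau, huv⟩ := exists_exit (s := ↑(box m)) hab ha hb
  exact ⟨v, mem_sphere_of_adj (hG huv) hu hv, (hau.mono restrict_le).trans huv.reachable⟩

lemma IsTrifurcation.exists_mem_sphere (hG : G ≤ lattice) {F : Set V} {x : Fin 3 → V}
    (h : IsTrifurcation G F x) (hF : F ⊆ box m) (i : Fin 3) :
    ∃ y ∈ sphere m, y ∈ cluster (restrict G Fᶜ) (x i) := by
  by_cases hx : x i ∈ box m
  · obtain ⟨z, hz, hzm⟩ := (h.infinite i).exists_notMem_finset (box m)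
    exact exists_mem_sphere_reachable (restrict_le.trans hG) hz hx hzm
  · obtain ⟨f, hf, hxf⟩ := h.exists_adj i
    exact ⟨x i, mem_sphere_of_adj (hG hxf.symm) (hF hf) hx, .rfl⟩

lemma finite_neighborSet_of_le_lattice (hG : G ≤ lattice) (a : V) : (G.neighborSet a).Finite := by
  obtain ⟨m, hm⟩ := exists_subset_box {a}
  exact (box (m + 1)).finite_toSet.subset fun b hab =>
    mem_box_succ_of_adj (hG hab) (hm (Finset.mem_singleton_self a))

lemma exists_restrict_box_reachable (h : G.Reachable a b) :
    ∃ n, (restrict G ↑(box n)).Reachable a b := by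
  obtain ⟨p⟩ := h
  obtain ⟨n, hn⟩ := exists_subset_box p.support.toFinset
  refine ⟨n, ?_⟩
  replace hn : ∀ v ∈ p.support, v ∈ box n := fun v hv => hn (List.mem_toFinset.2 hv)
  induction p with
  | nil => exact .rfl
  | @cons a c b hac p ih =>
    simp only [SimpleGraph.Walk.support_cons, List.mem_cons, forall_eq_or_imp] at hn
    exact .trans (SimpleGraph.Adj.reachable ⟨hac, hn.1, hn.2 c p.start_mem_support⟩) (ih hn.2)

lemma cluster_infinite_of_forall_exists_notMem_box
    (h : ∀ n, ∃ z ∉ box n, G.Reachable a z) : (cluster G a).Infinite := fun hfin => by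
  obtain ⟨n, hn⟩ := exists_subset_box hfin.toFinset
  obtain ⟨z, hz, haz⟩ := h n
  exact hz (hn (hfin.mem_toFinset.2 haz))

/-- Walk from `a` to the origin, decreasing one coordinate at a time. -/
lemma restrict_box_reachable_zero (h₁ : ∀ a ∈ box n, a + e1 ∈ box n → G.Adj a (a + e1))
    (h₂ : ∀ a ∈ box n, a + e2 ∈ box n → G.Adj a (a + e2)) (ha : a ∈ box n) :
    (restrict G ↑(box n)).Reachable a 0 := by
  induction hk : a.1.natAbs + a.2.natAbs generalizing a with
  | zero =>
    have ha0 : a = 0 := Prod.ext (by simp; omega) (by simp; omega)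
    exact ha0 ▸ .rfl
  | succ k ih =>
    have hstep : ∃ b ∈ box n, G.Adj a b ∧ b.1.natAbs + b.2.natAbs = k := by
      have hbox := mem_box.1 ha
      have forward : ∀ d : V, (∀ a ∈ box n, a + d ∈ box n → G.Adj a (a + d)) → a - d ∈ box n →
          G.Adj a (a - d) := fun d h hb => by
        simpa using (h (a - d) hb (by simpa using ha)).symm
      have pos1 : 0 < a.1 → a - e1 ∈ box n := fun h => by simp [mem_box, e1]; omega
      have neg1 : a.1 < 0 → a + e1 ∈ box n := fun h => by simp [mem_box, e1]; omega
      have pos2 : 0 < a.2 → a - e2 ∈ box n := fun h => by simp [mem_box, e2]; omega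
      have neg2 : a.2 < 0 → a + e2 ∈ box n := fun h => by simp [mem_box, e2]; omega
      rcases lt_trichotomy a.1 0 with h | h | h
      · exact ⟨_, neg1 h, h₁ a ha (neg1 h), by simp [e1]; omega⟩
      · rcases lt_trichotomy a.2 0 with h' | h' | h'
        · exact ⟨_, neg2 h', h₂ a ha (neg2 h'), by simp [e2]; omega⟩
        · omega
        · exact ⟨_, pos2 h', forward e2 h₂ (pos2 h'), by simp [e2]; omega⟩
      · exact ⟨_, pos1 h, forward e1 h₁ (pos1 h), by simp [e1]; omega⟩
    obtain ⟨b, hb, hab, hbk⟩ := hstep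
    exact .trans (SimpleGraph.Adj.reachable ⟨hab, ha, hb⟩) (ih hb hbk)

lemma restrict_box_reachable (h₁ : ∀ a ∈ box n, a + e1 ∈ box n → G.Adj a (a + e1))
    (h₂ : ∀ a ∈ box n, a + e2 ∈ box n → G.Adj a (a + e2)) (ha : a ∈ box n) (hb : b ∈ box n) :
    (restrict G ↑(box n)).Reachable a b :=
  (restrict_box_reachable_zero h₁ h₂ ha).trans (restrict_box_reachable_zero h₁ h₂ hb).symm

end SquareLattice

section MeasurableRandomGraphs

variable {α Ω : Type*} [MeasurableSpace Ω] {G : Ω → SimpleGraph α}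

/-- A random graph `G` is measurable if each of its edges is present on a measurable event. -/
def MeasurableGraph (G : Ω → SimpleGraph α) : Prop := ∀ a b, Measurable fun ω => (G ω).Adj a b

lemma MeasurableGraph.restrict (hG : MeasurableGraph G) (s : Set α) :
    MeasurableGraph fun ω => restrict (G ω) s :=
  fun a b => (hG a b).and measurable_const

variable [Countable α]

lemma MeasurableGraph.exists_walk_length_eq (hG : MeasurableGraph G) (n : ℕ) (a b : α) :
    Measurable fun ω => ∃ p : (G ω).Walk a b, p.length = n := by
  induction n generalizing a with
  | zero =>
    simp only [SimpleGraph.Walk.exists_length_eq_zero_iff]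
    exact measurable_const
  | succ n ih =>
    have hcons (ω : Ω) : (∃ p : (G ω).Walk a b, p.length = n + 1) ↔
        ∃ c, (G ω).Adj a c ∧ ∃ p : (G ω).Walk c b, p.length = n := by
      constructor
      · rintro ⟨p, hp⟩
        cases p with
        | nil => simp at hp
        | cons hac q => exact ⟨_, hac, q, by simpa using hp⟩
      · rintro ⟨c, hac, q, rfl⟩
        exact ⟨.cons hac q, rfl⟩
    simp only [hcons]
    exact .exists fun c => (hG a c).and (ih c)

lemma MeasurableGraph.reachable (hG : MeasurableGraph G) (a b : α) :
    Measurable fun ω => (G ω).Reachable a b := by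
  have hwalk (ω : Ω) : (G ω).Reachable a b ↔ ∃ n, ∃ p : (G ω).Walk a b, p.length = n :=
    ⟨fun ⟨p⟩ => ⟨_, p, rfl⟩, fun ⟨_, p, _⟩ => ⟨p⟩⟩
  simp only [hwalk]
  exact .exists fun n => hG.exists_walk_length_eq n a b

lemma MeasurableGraph.infinite_cluster (hG : MeasurableGraph G) (a : α) :
    Measurable fun ω => (cluster (G ω) a).Infinite := by
  have hinf (S : Set α) : S.Infinite ↔ ∀ F : Finset α, ∃ y ∈ S, y ∉ F :=
    ⟨fun h F => h.exists_notMem_finset F, fun h hS => by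
      obtain ⟨y, hy, hyS⟩ := h hS.toFinset
      exact hyS (hS.mem_toFinset.2 hy)⟩
  simp only [hinf]
  exact .forall fun F => .exists fun y => (hG.reachable a y).and measurable_const

lemma MeasurableGraph.isTrifurcation (hG : MeasurableGraph G) (F : Set α) (x : Fin 3 → α) :
    Measurable fun ω => IsTrifurcation (G ω) F x := by
  have hiff (ω : Ω) : IsTrifurcation (G ω) F x ↔
      (∀ a b, a ∈ F → b ∈ F → (DaC.restrict (G ω) F).Reachable a b) ∧ (∀ i, x i ∉ F) ∧
      (∀ i, ∃ f, f ∈ F ∧ (G ω).Adj (x i) f) ∧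
      (∀ i j, i ≠ j → ¬ (DaC.restrict (G ω) Fᶜ).Reachable (x i) (x j)) ∧
      ∀ i, (cluster (DaC.restrict (G ω) Fᶜ) (x i)).Infinite :=
    ⟨fun h => ⟨fun a b ha hb => h.connected a ha b hb, h.notMem, h.exists_adj, h.separated,
      h.infinite⟩, fun ⟨h₁, h₂, h₃, h₄, h₅⟩ => ⟨⟨fun a ha b hb => h₁ a b ha hb, h₂, h₃, h₄⟩, h₅⟩⟩
  simp only [hiff]
  refine .and ?_ (.and measurable_const (.and ?_ (.and ?_ ?_)))
  · exact .forall fun a => .forall fun b => measurable_const.imp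
      (measurable_const.imp ((hG.restrict F).reachable a b))
  · exact .forall fun i => .exists fun f => measurable_const.and (hG (x i) f)
  · exact .forall fun i => .forall fun j => measurable_const.imp
      ((hG.restrict Fᶜ).reachable (x i) (x j)).not
  · exact .forall fun i => (hG.restrict Fᶜ).infinite_cluster (x i)

end MeasurableRandomGraphs

section BurtonKeane

variable {Ω : Type*} [MeasurableSpace Ω] [AddAction V Ω] {μ : Measure Ω} {G : Ω → SimpleGraph V}

/-- The hypotheses of the Burton–Keane argument: `G` is a measurable, translation covariant random
subgraph of the square lattice, and almost every configuration can be modified into one which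
satisfies a prescribed almost sure property and in which an arbitrarily large finite set of vertices
has been merged. -/
structure IsBurtonKeane (μ : Measure Ω) (G : Ω → SimpleGraph V) : Prop where
  le_lattice : ∀ ω, G ω ≤ lattice
  measurable : MeasurableGraph G
  adj_vadd : ∀ u ω a b, (G (u +ᵥ ω)).Adj a b ↔ (G ω).Adj (a + u) (b + u)
  merging : ∀ Q : Ω → Prop, (∀ᵐ ω ∂μ, Q ω) →
    ∀ᵐ ω ∂μ, ∀ n, ∃ ω', ∃ F : Finset V, Q ω' ∧ box n ⊆ F ∧ IsMerging (G ω) (G ω') F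

/-- Translation by `u` as an isomorphism of the graphs of two shifted configurations. -/
def IsBurtonKeane.translate (h : IsBurtonKeane μ G) (u : V) (ω : Ω) : G (u +ᵥ ω) ≃g G ω where
  toEquiv := Equiv.addRight u
  map_rel_iff' := (h.adj_vadd u ω _ _).symm

lemma card_mul_measure_le [MeasurableConstVAdd V Ω] [VAddInvariantMeasure V Ω μ]
    [IsProbabilityMeasure μ] {T : Set Ω} (hT : MeasurableSet T) {I : Finset V} {N : ℕ}
    (hN : ∀ ω, ∀ J ⊆ I, (∀ u ∈ J, u +ᵥ ω ∈ T) → J.card ≤ N) : I.card * μ T ≤ N := by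
  classical
  have hcount (ω : Ω) : ∑ u ∈ I, ((u +ᵥ ·) ⁻¹' T).indicator (1 : Ω → ℝ≥0∞) ω ≤ N := by
    simp only [Set.indicator_apply, Pi.one_apply, Finset.sum_boole, Nat.cast_le]
    exact hN ω _ (Finset.filter_subset _ _) fun u hu => (Finset.mem_filter.1 hu).2
  calc I.card * μ T = ∑ u ∈ I, μ ((u +ᵥ ·) ⁻¹' T) := by
        simp [measure_preimage_vadd]
    _ = ∫⁻ ω, ∑ u ∈ I, ((u +ᵥ ·) ⁻¹' T).indicator 1 ω ∂μ := by
        rw [lintegral_finsetSum I fun u _ =>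
          measurable_one.indicator (measurable_const_vadd u hT)]
        simp_rw [lintegral_indicator_one (measurable_const_vadd _ hT)]
    _ ≤ ∫⁻ _, N ∂μ := lintegral_mono hcount
    _ = N := by simp

lemma IsBurtonKeane.card_trifurcation_le (h : IsBurtonKeane μ G) {m L : ℕ} {F : Set V}
    (hF : F ⊆ box m) {x : Fin 3 → V} (ω : Ω) {J : Finset V}
    (hJ : ∀ u ∈ J, ∃ i ∈ box L, u = (2 * m + 1 : ℤ) • i)
    (htri : ∀ u ∈ J, IsTrifurcation (G (u +ᵥ ω)) F x) :
    J.card ≤ 8 * ((2 * m + 1) * L + m) + 8 := by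
  have htri' (u) (hu : u ∈ J) :
      IsTrifurcation (G ω) (h.translate u ω '' F) (h.translate u ω ∘ x) :=
    (htri u hu).map_iso _
  rw [← card_sphere]
  refine card_le_card_of_isTripod J _ (fun u hu => (htri' u hu).toIsTripod)
    (fun u hu v hv huv => ?_) (fun u hu => (htri' u hu).exists_mem_sphere (h.le_lattice ω) ?_)
  · rw [Set.disjoint_left]
    rintro _ ⟨a, ha, rfl⟩ ⟨b, hb, hab⟩
    obtain ⟨i, -, rfl⟩ := hJ u hu
    obtain ⟨j, -, rfl⟩ := hJ v hv
    have key : ∀ i j a b : ℤ, (-m ≤ a ∧ a ≤ m) → (-m ≤ b ∧ b ≤ m) →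
        b + (2 * m + 1) * j = a + (2 * m + 1) * i → i = j := fun i j a b ha hb h => by
      by_contra hij
      rcases lt_or_gt_of_ne hij with h | h <;> nlinarith
    have hab' : b + (2 * m + 1 : ℤ) • j = a + (2 * m + 1 : ℤ) • i := hab
    simp only [Prod.ext_iff, Prod.fst_add, Prod.snd_add, Prod.smul_fst, Prod.smul_snd,
      smul_eq_mul] at hab'
    have ha := mem_box.1 (hF ha)
    have hb := mem_box.1 (hF hb)
    exact huv (congrArg _ (Prod.ext (key _ _ _ _ ha.1 hb.1 hab'.1) (key _ _ _ _ ha.2 hb.2 hab'.2)))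
  · rintro _ ⟨a, ha, rfl⟩
    obtain ⟨i, hi, rfl⟩ := hJ u hu
    have ha := mem_box.1 (hF ha)
    have hi := mem_box.1 hi
    have hbound : ∀ a i : ℤ, (-m ≤ a ∧ a ≤ m) → (-L ≤ i ∧ i ≤ L) →
        -((2 * m + 1) * L + m) ≤ a + (2 * m + 1) * i ∧
          a + (2 * m + 1) * i ≤ (2 * m + 1) * L + m := fun a i ha hi => by
      constructor <;> nlinarith
    change a + (2 * m + 1 : ℤ) • i ∈ box _
    rw [mem_box]
    push_cast
    exact ⟨hbound _ _ ha.1 hi.1, hbound _ _ ha.2 hi.2⟩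

lemma IsBurtonKeane.infinite_cluster_vadd_iff (h : IsBurtonKeane μ G) (u : V) (ω : Ω) (x : V) :
    (cluster (G (u +ᵥ ω)) x).Infinite ↔ (cluster (G ω) (x + u)).Infinite :=
  (Set.infinite_image_iff (h.translate u ω).injective.injOn).symm.trans
    (cluster_apply_iso (h.translate u ω) x ▸ Iff.rfl)

lemma ae_or_ae_not_of_vadd_iff [ErgodicVAdd V Ω μ] {P : Ω → Prop} (hP : Measurable P)
    (hinv : ∀ (u : V) ω, P (u +ᵥ ω) ↔ P ω) : (∀ᵐ ω ∂μ, P ω) ∨ ∀ᵐ ω ∂μ, ¬ P ω := by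
  have hconst := ErgodicVAdd.aeconst_of_forall_preimage_vadd_ae_eq (μ := μ) (G := V)
    (measurableSet_setOfPred.2 hP) fun u => .of_eq (Set.ext fun ω => hinv u ω)
  exact Filter.eventuallyConst_pred.1 hconst

lemma IsBurtonKeane.ae_exists_infinite_or_ae_not [ErgodicVAdd V Ω μ] (h : IsBurtonKeane μ G) :
    (∀ᵐ ω ∂μ, ∃ x, (cluster (G ω) x).Infinite) ∨ ∀ᵐ ω ∂μ, ¬ ∃ x, (cluster (G ω) x).Infinite := by
  refine ae_or_ae_not_of_vadd_iff (.exists fun x => h.measurable.infinite_cluster x) fun u ω => ?_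
  exact (Equiv.addRight u).exists_congr fun x => h.infinite_cluster_vadd_iff u ω x

lemma IsBurtonKeane.ae_unique_or_ae_not [ErgodicVAdd V Ω μ] (h : IsBurtonKeane μ G) :
    (∀ᵐ ω ∂μ, ∀ x y, (cluster (G ω) x).Infinite → (cluster (G ω) y).Infinite →
      (G ω).Reachable x y) ∨
    ∀ᵐ ω ∂μ, ¬ ∀ x y, (cluster (G ω) x).Infinite → (cluster (G ω) y).Infinite →
      (G ω).Reachable x y := by
  refine ae_or_ae_not_of_vadd_iff (.forall fun x => .forall fun y =>
    (h.measurable.infinite_cluster x).imp ((h.measurable.infinite_cluster y).imp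
      (h.measurable.reachable x y))) fun u ω => ?_
  refine (Equiv.addRight u).forall_congr fun x => (Equiv.addRight u).forall_congr fun y => ?_
  exact imp_congr (h.infinite_cluster_vadd_iff u ω x) (imp_congr
    (h.infinite_cluster_vadd_iff u ω y) (h.translate u ω).reachable_iff.symm)

variable [MeasurableConstVAdd V Ω] [IsProbabilityMeasure μ]

lemma IsBurtonKeane.ae_not_isTrifurcation [VAddInvariantMeasure V Ω μ] (h : IsBurtonKeane μ G)
    (F : Finset V) (x : Fin 3 → V) : ∀ᵐ ω ∂μ, ¬ IsTrifurcation (G ω) F x := by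
  classical
  obtain ⟨m, hm⟩ := exists_subset_box F
  set T := {ω | IsTrifurcation (G ω) F x}
  have hT : MeasurableSet T := measurableSet_setOfPred.2 (h.measurable.isTrifurcation F x)
  have hinj : Function.Injective fun i : V => (2 * m + 1 : ℤ) • i :=
    smul_right_injective V (by omega)
  have hcount (L : ℕ) : ((2 * L + 1) ^ 2 : ℕ) * μ T ≤ (8 * ((2 * m + 1) * L + m) + 8 : ℕ) := by
    rw [← card_box, ← Finset.card_image_of_injective _ hinj]
    refine card_mul_measure_le hT fun ω J hJ htri =>
      h.card_trifurcation_le (Finset.coe_subset.2 hm) ω (fun u hu => ?_) htri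
    obtain ⟨i, hi, rfl⟩ := Finset.mem_image.1 (hJ hu)
    exact ⟨i, hi, rfl⟩
  have hreal (L : ℕ) : (2 * L + 1 : ℝ) ^ 2 * μ.real T ≤ 8 * ((2 * m + 1) * L + m) + 8 := by
    have := ENNReal.toReal_mono (ENNReal.natCast_ne_top _) (hcount L)
    rw [ENNReal.toReal_mul, ENNReal.toReal_natCast, ENNReal.toReal_natCast] at this
    exact_mod_cast this
  refine measure_eq_zero_iff_ae_notMem.1 ((measureReal_eq_zero_iff).1 ?_)
  by_contra hne
  have hpos : 0 < μ.real T := lt_of_le_of_ne measureReal_nonneg (Ne.symm hne)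
  obtain ⟨L, hL⟩ := exists_nat_gt ((2 * m + 1 : ℝ) * 8 / μ.real T)
  rw [div_lt_iff₀ hpos] at hL
  have hL0 : (0 : ℝ) ≤ L := by positivity
  nlinarith [hreal L, mul_nonneg hL0 (Nat.cast_nonneg (α := ℝ) m), mul_nonneg hL0 hpos.le]

lemma IsBurtonKeane.ae_not_three_infinite [VAddInvariantMeasure V Ω μ] (h : IsBurtonKeane μ G) :
    ∀ᵐ ω ∂μ, ¬ ∃ x : Fin 3 → V, (∀ i, (cluster (G ω) (x i)).Infinite) ∧
      ∀ i j, i ≠ j → ¬ (G ω).Reachable (x i) (x j) := by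
  classical
  have hnone : ∀ᵐ ω ∂μ, ∀ (F : Finset V) x, ¬ IsTrifurcation (G ω) F x :=
    ae_all_iff.2 fun F => ae_all_iff.2 fun x => h.ae_not_isTrifurcation F x
  filter_upwards [h.merging _ hnone] with ω hω
  rintro ⟨x, hinf, hsep⟩
  obtain ⟨n, hn⟩ := exists_subset_box (Finset.univ.image x)
  obtain ⟨ω', F, hnone, hF, hmerge⟩ := hω n
  obtain ⟨y, hy⟩ := hmerge.exists_isTrifurcation F.finite_toSet
    (fun f _ => finite_neighborSet_of_le_lattice (h.le_lattice ω) f) hinf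
    (fun i => ⟨x i, hF (hn (Finset.mem_image_of_mem x (Finset.mem_univ i))), .rfl⟩) hsep
  exact hnone F y hy

theorem IsBurtonKeane.ae_unique [ErgodicVAdd V Ω μ] (h : IsBurtonKeane μ G) :
    ∀ᵐ ω ∂μ, ∀ x y, (cluster (G ω) x).Infinite → (cluster (G ω) y).Infinite →
      (G ω).Reachable x y := by
  refine h.ae_unique_or_ae_not.resolve_right fun hmany => ?_
  obtain ⟨ω, hω, htwo, hthree⟩ :=
    ((h.merging _ hmany).and (hmany.and h.ae_not_three_infinite)).exists
  push Not at htwo hthree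
  obtain ⟨x, y, hx, hy, hxy⟩ := htwo
  obtain ⟨n, hn⟩ := exists_subset_box {x, y}
  obtain ⟨ω', F, hmany', hF, hmerge⟩ := hω n
  have hxF : x ∈ F := hF (hn (by simp))
  have hyF : y ∈ F := hF (hn (by simp))
  refine hmany' fun a b ha hb => hmerge.reachable_of_infinite (fun z hz => ?_) ha hb
  by_contra! hzF
  have hzx := hzF x hxF
  have hzy := hzF y hyF
  obtain ⟨i, j, hij, hreach⟩ := hthree ![x, y, z] (by intro i; fin_cases i <;> assumption)
  fin_cases i <;> fin_cases j <;>
    first | exact hij rfl | exact hxy hreach | exact hxy hreach.symm | exact hzx hreach |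
      exact hzx hreach.symm | exact hzy hreach | exact hzy hreach.symm

end BurtonKeane

section ZeroOne

open ProbabilityTheory
open scoped symmDiff

variable {Ω : Type*} [MeasurableSpace Ω] {μ : Measure Ω} [IsProbabilityMeasure μ] {A C : Set Ω}

lemma abs_measureReal_sub_sq_le {T : Ω → Ω} (hT : MeasurePreserving T μ μ) (hA : MeasurableSet A)
    (hinv : T ⁻¹' A =ᵐ[μ] A) (hC : MeasurableSet C)
    (hind : μ.real (C ∩ T ⁻¹' C) = μ.real C ^ 2) {ε : ℝ} (hCA : μ.real (C ∆ A) ≤ ε) :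
    |μ.real A - μ.real A ^ 2| ≤ 4 * ε := by
  have hTCA : μ.real ((T ⁻¹' C) ∆ A) ≤ ε :=
    calc μ.real ((T ⁻¹' C) ∆ A) = μ.real ((T ⁻¹' C) ∆ (T ⁻¹' A)) :=
          measureReal_congr ((ae_eq_refl _).symmDiff hinv.symm)
      _ = μ.real (C ∆ A) := hT.measureReal_preimage (hC.symmDiff hA).nullMeasurableSet
      _ ≤ ε := hCA
  have hsub : (C ∩ T ⁻¹' C) ∆ A ⊆ (C ∆ A) ∪ ((T ⁻¹' C) ∆ A) := fun x hx => by
    simp only [Set.mem_symmDiff, Set.mem_inter_iff, Set.mem_union] at hx ⊢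
    tauto
  have hdiff : |μ.real C - μ.real A| ≤ ε :=
    (abs_measureReal_sub_le_measureReal_symmDiff hC.nullMeasurableSet
      hA.nullMeasurableSet).trans hCA
  have hdiff_sq : |μ.real C ^ 2 - μ.real A| ≤ 2 * ε :=
    calc |μ.real C ^ 2 - μ.real A| ≤ μ.real ((C ∩ T ⁻¹' C) ∆ A) := hind ▸
          abs_measureReal_sub_le_measureReal_symmDiff
            (hC.inter (hT.measurable hC)).nullMeasurableSet hA.nullMeasurableSet
      _ ≤ μ.real (C ∆ A) + μ.real ((T ⁻¹' C) ∆ A) :=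
          (measureReal_mono hsub).trans (measureReal_union_le _ _)
      _ ≤ 2 * ε := by linarith
  have hA0 : 0 ≤ μ.real A := measureReal_nonneg
  have hA1 : μ.real A ≤ 1 := measureReal_le_one
  have hC0 : 0 ≤ μ.real C := measureReal_nonneg
  have hC1 : μ.real C ≤ 1 := measureReal_le_one
  rw [abs_le] at *
  constructor <;> nlinarith

lemma eventuallyConst_of_forall_approx (hA : MeasurableSet A)
    (h : ∀ ε > 0, ∃ C, MeasurableSet C ∧ μ.real (C ∆ A) ≤ ε ∧ ∃ T : Ω → Ω,
      MeasurePreserving T μ μ ∧ T ⁻¹' A =ᵐ[μ] A ∧ μ.real (C ∩ T ⁻¹' C) = μ.real C ^ 2) :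
    Filter.EventuallyConst A (ae μ) := by
  have hle : |μ.real A - μ.real A ^ 2| ≤ 0 := le_of_forall_pos_le_add fun ε hε => by
    obtain ⟨C, hC, hCA, T, hT, hinv, hind⟩ := h (ε / 4) (by positivity)
    linarith [abs_measureReal_sub_sq_le hT hA hinv hC hind hCA]
  have hzero : μ.real A * (1 - μ.real A) = 0 := by linarith [abs_nonpos_iff.1 hle]
  refine Filter.eventuallyConst_set'.2 ((mul_eq_zero.1 hzero).imp (fun h0 => ?_) fun h1 => ?_)
  · exact ae_eq_empty.2 ((measureReal_eq_zero_iff).1 h0)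
  · have hcompl := probReal_compl_eq_one_sub (μ := μ) hA
    exact ae_eq_univ.2 ((measureReal_eq_zero_iff).1 (hcompl.trans h1))

variable {ι X : Type*} [MeasurableSpace X] {P : ι → Measure X} [∀ i, IsProbabilityMeasure (P i)]
  {e : ι → ι}

lemma measurePreserving_infinitePi_comp (he : Function.Injective e) (hP : ∀ i, P (e i) = P i) :
    MeasurePreserving (fun (ω : ι → X) i => ω (e i)) (Measure.infinitePi P)
      (Measure.infinitePi P) := by
  refine ⟨by fun_prop, ?_⟩
  rw [Measure.map_infinitePi_infinitePi_of_inj he]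
  simp_rw [hP]

lemma measureReal_cylinder_inter_preimage_comp [DecidableEq ι] (he : Function.Injective e)
    (hP : ∀ i, P (e i) = P i) {s : Finset ι} (hs : Disjoint s (s.image e)) {S : Set (s → X)}
    (hS : MeasurableSet S) :
    (Measure.infinitePi P).real (cylinder (α := fun _ => X) s S ∩
      (fun ω i => ω (e i)) ⁻¹' cylinder (α := fun _ => X) s S) =
    (Measure.infinitePi P).real (cylinder (α := fun _ => X) s S) ^ 2 := by
  have hindep : iIndepFun (fun i (ω : ι → X) => ω i) (Measure.infinitePi P) :=
    iIndepFun_infinitePi (X := fun _ x => x) fun _ => measurable_id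
  let pull : (s.image e → X) → s → X := fun y i => y ⟨e i, Finset.mem_image_of_mem e i.2⟩
  have hpull : Measurable pull := by fun_prop
  have hmul := (hindep.indepFun_finset s _ hs fun i => measurable_pi_apply i)
    |>.measure_inter_preimage_eq_mul S (pull ⁻¹' S) hS (hpull hS)
  have hpres := (measurePreserving_infinitePi_comp he hP).measure_preimage
    (hS.cylinder (α := fun _ => X)).nullMeasurableSet
  rw [sq, measureReal_def, measureReal_def, ← ENNReal.toReal_mul]
  congr 1
  exact hmul.trans (congrArg _ hpres)

/-- Approximating an invariant event by a cylinder and moving the coordinates of the cylinder away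
from themselves makes the event independent of itself. -/
lemma eventuallyConst_infinitePi [DecidableEq ι] {A : Set (ι → X)} (hA : MeasurableSet A)
    (h : ∀ s : Finset ι, ∃ e : ι → ι, Function.Injective e ∧ (∀ i, P (e i) = P i) ∧
      Disjoint s (s.image e) ∧ (fun ω i => ω (e i)) ⁻¹' A =ᵐ[Measure.infinitePi P] A) :
    Filter.EventuallyConst A (ae (Measure.infinitePi P)) := by
  refine eventuallyConst_of_forall_approx hA fun ε hε => ?_
  obtain ⟨C, hC, hCA⟩ := exists_measure_symmDiff_lt_of_generateFrom_isSetRing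
    (μ := Measure.infinitePi P) (C := measurableCylinders fun _ : ι => X)
    isSetRing_measurableCylinders
    ⟨{Set.univ}, by simp, Set.singleton_subset_iff.2 (univ_mem_measurableCylinders _), by simp⟩
    generateFrom_measurableCylinders.symm hA (ε := ENNReal.ofReal ε) (by simpa using hε)
  obtain ⟨s, S, hS, rfl⟩ := (mem_measurableCylinders _).1 hC
  obtain ⟨e, he, hP, hs, hinv⟩ := h s
  exact ⟨_, hS.cylinder, ENNReal.toReal_le_of_le_ofReal hε.le hCA.le, _,
    measurePreserving_infinitePi_comp he hP, hinv,
    measureReal_cylinder_inter_preimage_comp he hP hs hS⟩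

end ZeroOne

section FiniteEnergy

variable {ι : Type*} {X : ι → Type*} [∀ i, MeasurableSpace (X i)] {P : ∀ i, Measure (X i)}
  [∀ i, IsProbabilityMeasure (P i)]

lemma measurePreserving_set_piecewise (s : Set ι) [DecidablePred (· ∈ s)] :
    MeasurePreserving (fun z : (∀ i, X i) × ∀ i, X i => s.piecewise z.1 z.2)
      ((Measure.infinitePi P).prod (Measure.infinitePi P)) (Measure.infinitePi P) := by
  have hmeas : Measurable fun z : (∀ i, X i) × ∀ i, X i => s.piecewise z.1 z.2 := by
    refine measurable_pi_lambda _ fun i => ?_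
    by_cases hi : i ∈ s <;> simp only [Set.piecewise, hi, if_true, if_false] <;> fun_prop
  refine ⟨hmeas, Measure.eq_infinitePi _ fun t T hT => ?_⟩
  have hpre : (fun z : (∀ i, X i) × ∀ i, X i => s.piecewise z.1 z.2) ⁻¹' (t : Set ι).pi T =
      (t.filter (· ∈ s) : Set ι).pi T ×ˢ (t.filter (· ∉ s) : Set ι).pi T := by
    ext z
    simp only [Set.mem_preimage, Set.mem_prod, Set.mem_pi, Finset.mem_coe, Finset.mem_filter,
      Set.piecewise]
    refine ⟨fun h => ⟨fun i hi => ?_, fun i hi => ?_⟩, fun h i hi => ?_⟩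
    · simpa [hi.2] using h i hi.1
    · simpa [hi.2] using h i hi.1
    · split_ifs with his
      exacts [h.1 i ⟨hi, his⟩, h.2 i ⟨hi, his⟩]
  rw [Measure.map_apply hmeas (.pi t.countable_toSet fun i _ => hT i), hpre, Measure.prod_prod,
    Measure.infinitePi_pi _ fun i _ => hT i, Measure.infinitePi_pi _ fun i _ => hT i,
    Finset.prod_filter_mul_prod_filter_not]

variable [DecidableEq ι] [∀ i, MeasurableSingletonClass (X i)]

lemma quasiMeasurePreserving_piecewise {x : ∀ i, X i} {S : Finset ι}
    (hS : ∀ i ∈ S, P i {x i} ≠ 0) :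
    Measure.QuasiMeasurePreserving (fun ω => S.piecewise x ω) (Measure.infinitePi P)
      (Measure.infinitePi P) := by
  have hm : Measurable fun ω : ∀ i, X i => S.piecewise x ω := by
    refine measurable_pi_lambda _ fun i => ?_
    by_cases hi : i ∈ S <;> simp only [Finset.piecewise, hi, if_true, if_false] <;> fun_prop
  refine ⟨hm, Measure.AbsolutelyContinuous.mk fun B hB hB0 => ?_⟩
  rw [Measure.map_apply hm hB]
  have hmix := measurePreserving_set_piecewise (P := P) (S : Set ι)
  have hsub : ((S : Set ι).pi fun i => {x i}) ×ˢ ((fun ω => S.piecewise x ω) ⁻¹' B) ⊆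
      (fun z : (∀ i, X i) × ∀ i, X i => (S : Set ι).piecewise z.1 z.2) ⁻¹' B := by
    rintro ⟨ω', ω⟩ ⟨hω', hω⟩
    have heq : S.piecewise ω' ω = S.piecewise x ω :=
      S.piecewise_congr hω' fun _ _ => rfl
    rw [Set.mem_preimage, Finset.piecewise_coe, heq]
    exact hω
  have hle : (∏ i ∈ S, P i {x i}) *
      Measure.infinitePi P ((fun ω => S.piecewise x ω) ⁻¹' B) ≤ 0 :=
    calc _ = ((Measure.infinitePi P).prod (Measure.infinitePi P))
            (((S : Set ι).pi fun i => {x i}) ×ˢ ((fun ω => S.piecewise x ω) ⁻¹' B)) := by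
          rw [Measure.prod_prod, Measure.infinitePi_pi _ fun i _ => .singleton _]
      _ ≤ _ := measure_mono hsub
      _ = 0 := by rw [hmix.measure_preimage hB.nullMeasurableSet, hB0]
  exact (mul_eq_zero.1 (nonpos_iff_eq_zero.1 hle)).resolve_left (Finset.prod_ne_zero_iff.2 hS)

/-- Finite energy. -/
lemma ae_forall_piecewise [Countable ι] {Q : (∀ i, X i) → Prop}
    (hQ : ∀ᵐ ω ∂Measure.infinitePi P, Q ω) (x : ∀ i, X i) :
    ∀ᵐ ω ∂Measure.infinitePi P, ∀ S : Finset ι, (∀ i ∈ S, P i {x i} ≠ 0) →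
      Q (S.piecewise x ω) := by
  refine ae_all_iff.2 fun S => ?_
  by_cases hS : ∀ i ∈ S, P i {x i} ≠ 0
  · filter_upwards [(quasiMeasurePreserving_piecewise hS).ae hQ] with ω hω _ using hω
  · exact .of_forall fun ω h => absurd h hS

end FiniteEnergy

section Bits

/-- Configurations of independent bits, three at each vertex. The bits `0` and `1` of `a` are the
states of the edges from `a` to `a + e1` and to `a + e2`, and bit `2` is a colour offered by `a`. -/
abbrev Bits : Type := V × Fin 3 → Bool

instance : AddAction V Bits where
  vadd u ω i := ω (i.1 + u, i.2)
  zero_vadd ω := funext fun i => congrArg ω (Prod.ext (add_zero i.1) rfl)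
  add_vadd u v ω := funext fun i => congrArg ω (Prod.ext (add_assoc i.1 u v).symm rfl)

lemma Bits.vadd_apply (u : V) (ω : Bits) (i : V × Fin 3) : (u +ᵥ ω) i = ω (i.1 + u, i.2) := rfl

instance : MeasurableConstVAdd V Bits where
  measurable_const_vadd u := measurable_pi_iff.2 fun i => measurable_pi_apply (i.1 + u, i.2)

/-- The law of independent bits when the bits of type `k` have law `ν k`. -/
noncomputable def bitsMeasure (ν : Fin 3 → Measure Bool) : Measure Bits :=
  Measure.infinitePi fun i => ν i.2

variable {ν : Fin 3 → Measure Bool} [∀ k, IsProbabilityMeasure (ν k)]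

instance : IsProbabilityMeasure (bitsMeasure ν) := by
  unfold bitsMeasure
  infer_instance

lemma injective_translate (u : V) :
    Function.Injective fun i : V × Fin 3 => ((i.1 + u, i.2) : V × Fin 3) :=
  (add_left_injective u).prodMap Function.injective_id

lemma exists_disjoint_translate (s : Finset (V × Fin 3)) :
    ∃ u : V, Disjoint s (s.image fun i => (i.1 + u, i.2)) := by
  obtain ⟨n, hn⟩ := exists_subset_box (s.image Prod.fst)
  refine ⟨(2 * n + 1, 0), Finset.disjoint_left.2 fun j hj hj' => ?_⟩
  obtain ⟨i, hi, rfl⟩ := Finset.mem_image.1 hj'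
  have hin := (mem_box.1 (hn (Finset.mem_image_of_mem _ hi))).1
  have hjn := (mem_box.1 (hn (Finset.mem_image_of_mem _ hj))).1
  rw [Prod.fst_add] at hjn
  omega

instance : ErgodicVAdd V Bits (bitsMeasure ν) where
  measure_preimage_vadd u _ hs :=
    have hpres : MeasurePreserving (u +ᵥ · : Bits → Bits) (bitsMeasure ν) (bitsMeasure ν) :=
      measurePreserving_infinitePi_comp (injective_translate u) fun _ => rfl
    hpres.measure_preimage hs.nullMeasurableSet
  aeconst_of_forall_preimage_vadd_ae_eq hA hinv :=
    eventuallyConst_infinitePi hA fun s =>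
      have ⟨u, hu⟩ := exists_disjoint_translate s
      ⟨_, injective_translate u, fun _ => rfl, hu, hinv u⟩

end Bits

section Harris

variable {ι X : Type*}

lemma mem_measurableCylinders_of_dependsOn [Finite X] [MeasurableSpace X]
    [MeasurableSingletonClass X] {A : Set (ι → X)} {s : Finset ι}
    (hA : DependsOn (· ∈ A) (s : Set ι)) : A ∈ measurableCylinders fun _ : ι => X := by
  refine (mem_measurableCylinders A).2 ⟨s, s.restrict '' A, (Set.toFinite _).measurableSet, ?_⟩
  ext ω
  refine ⟨fun hω => ⟨ω, hω, rfl⟩, ?_⟩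
  rintro ⟨ω', hω', heq⟩
  exact (iff_of_eq (hA fun i hi => congr_fun heq ⟨i, hi⟩)).1 hω'

variable [LinearOrder X]

lemma isUpperSet_of_cylinder [Nonempty X] {s : Finset ι} {S : Set (s → X)}
    (h : IsUpperSet (cylinder (α := fun _ => X) s S)) : IsUpperSet S := by
  classical
  intro y z hyz hy
  let extend (x : s → X) (i : ι) : X := if hi : i ∈ s then x ⟨i, hi⟩ else Classical.arbitrary X
  have restrict_extend (x : s → X) : s.restrict (extend x) = x := by
    ext i
    simp [extend]
  have extend_le : extend y ≤ extend z := fun i => by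
    by_cases hi : i ∈ s
    · simpa [extend, hi] using hyz ⟨i, hi⟩
    · simp [extend, hi]
  simpa only [mem_cylinder, restrict_extend] using
    h extend_le (by simpa only [mem_cylinder, restrict_extend] using hy)

variable [Finite X] [MeasurableSpace X] [MeasurableSingletonClass X]

lemma measureReal_pi_mul_le_inter [Fintype ι] (P : ι → Measure X) [∀ i, IsProbabilityMeasure (P i)]
    {A B : Set (ι → X)} (hA : IsUpperSet A) (hB : IsUpperSet B) :
    (Measure.pi P).real A * (Measure.pi P).real B ≤ (Measure.pi P).real (A ∩ B) := by
  classical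
  have := Fintype.ofFinite X
  let weight (x : ι → X) : ℝ := (Measure.pi P).real {x}
  have weight_eq (x) : weight x = ∏ i, (P i).real {x i} := by
    simp only [weight, measureReal_def, Measure.pi_singleton, ENNReal.toReal_prod]
  have sum_indicator (C : Set (ι → X)) :
      (Measure.pi P).real C = ∑ x, weight x * C.indicator 1 x := by
    simp only [Set.indicator_apply, Pi.one_apply, mul_ite, mul_one, mul_zero, ← Finset.sum_filter,
      weight]
    rw [sum_measureReal_singleton]
    simp
  have indicator_nonneg (C : Set (ι → X)) : (0 : (ι → X) → ℝ) ≤ C.indicator 1 :=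
    Set.indicator_nonneg fun _ _ => zero_le_one
  have monotone_indicator {C : Set (ι → X)} (hC : IsUpperSet C) :
      Monotone (C.indicator (1 : (ι → X) → ℝ)) := fun x y hxy => by
    by_cases hx : x ∈ C
    · simp [hx, hC hxy hx]
    · simpa [hx] using indicator_nonneg C y
  have lattice_condition (x y) : weight x * weight y ≤ weight (x ⊓ y) * weight (x ⊔ y) := by
    simp only [weight_eq, ← Finset.prod_mul_distrib, Pi.inf_apply, Pi.sup_apply]
    refine (Finset.prod_congr rfl fun i _ => ?_).le
    rcases le_total (x i) (y i) with h | h <;> simp [h, mul_comm]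
  have total : ∑ x, weight x = 1 := by
    simpa using (sum_indicator Set.univ).symm
  have hfkg := fkg (A.indicator 1) (B.indicator 1) weight (fun _ => measureReal_nonneg)
    (indicator_nonneg A) (indicator_nonneg B) (monotone_indicator hA) (monotone_indicator hB)
    lattice_condition
  simpa only [sum_indicator, Set.inter_indicator_one, total, one_mul, Pi.mul_apply] using hfkg

variable [Nonempty X] (P : ι → Measure X) [∀ i, IsProbabilityMeasure (P i)]

theorem harris_inequality {A B : Set (ι → X)} (hA : A ∈ measurableCylinders fun _ : ι => X)
    (hB : B ∈ measurableCylinders fun _ : ι => X) (hA' : IsUpperSet A) (hB' : IsUpperSet B) :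
    (Measure.infinitePi P).real A * (Measure.infinitePi P).real B ≤
      (Measure.infinitePi P).real (A ∩ B) := by
  classical
  obtain ⟨s, S, -, rfl⟩ := (mem_measurableCylinders A).1 hA
  obtain ⟨t, T, -, rfl⟩ := (mem_measurableCylinders B).1 hB
  obtain ⟨S', hS⟩ : ∃ S', cylinder s S = cylinder (α := fun _ => X) (s ∪ t) S' :=
    ⟨_, cylinder_eq_cylinder_union (α := fun _ => X) s S t⟩
  obtain ⟨T', hT⟩ : ∃ T', cylinder t T = cylinder (α := fun _ => X) (s ∪ t) T' := by
    rw [Finset.union_comm]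
    exact ⟨_, cylinder_eq_cylinder_union (α := fun _ => X) t T s⟩
  have cylinder_real (C : Set ((s ∪ t : Finset ι) → X)) :
      (Measure.infinitePi P).real (cylinder (s ∪ t) C) = (Measure.pi fun i => P i.1).real C := by
    rw [measureReal_def, Measure.infinitePi_cylinder P (Set.toFinite C).measurableSet,
      measureReal_def]
  rw [hS] at hA' ⊢
  rw [hT] at hB' ⊢
  have inter_eq : cylinder (α := fun _ => X) (s ∪ t) S' ∩ cylinder (s ∪ t) T' =
      cylinder (s ∪ t) (S' ∩ T') := rfl
  rw [inter_eq, cylinder_real, cylinder_real, cylinder_real]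
  exact measureReal_pi_mul_le_inter _ (isUpperSet_of_cylinder hA') (isUpperSet_of_cylinder hB')

lemma one_sub_mul_one_sub_le_one_sub_union {A B : Set (ι → X)}
    (hA : A ∈ measurableCylinders fun _ : ι => X) (hB : B ∈ measurableCylinders fun _ : ι => X)
    (hA' : IsUpperSet A) (hB' : IsUpperSet B) :
    (1 - (Measure.infinitePi P).real A) * (1 - (Measure.infinitePi P).real B) ≤
      1 - (Measure.infinitePi P).real (A ∪ B) := by
  have inter_le := harris_inequality P hA hB hA' hB'
  have union_add_inter := measureReal_union_add_inter (μ := Measure.infinitePi P) (s := A)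
    (MeasurableSet.of_mem_measurableCylinders hB)
  linear_combination inter_le + union_add_inter

lemma prod_one_sub_le_one_sub_biUnion {κ : Type*} (K : Finset κ) {A : κ → Set (ι → X)}
    (hA : ∀ i ∈ K, A i ∈ measurableCylinders fun _ : ι => X) (hA' : ∀ i ∈ K, IsUpperSet (A i)) :
    ∏ i ∈ K, (1 - (Measure.infinitePi P).real (A i)) ≤
      1 - (Measure.infinitePi P).real (⋃ i ∈ K, A i) := by
  classical
  induction K using Finset.induction_on with
  | empty => simp
  | insert i K hi ih =>
    rw [Finset.forall_mem_insert] at hA hA'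
    rw [Finset.prod_insert hi, Finset.set_biUnion_insert]
    calc _ ≤ (1 - (Measure.infinitePi P).real (A i)) *
          (1 - (Measure.infinitePi P).real (⋃ j ∈ K, A j)) :=
        mul_le_mul_of_nonneg_left (ih hA.2 hA'.2) (sub_nonneg.2 measureReal_le_one)
      _ ≤ _ := one_sub_mul_one_sub_le_one_sub_union P hA.1
        (isSetRing_measurableCylinders.biUnion_mem K hA.2) hA'.1
        (isUpperSet_iUnion₂ hA'.2)

end Harris

lemma tendsto_measureReal_zero_of_antitone {Ω : Type*} [MeasurableSpace Ω] {μ : Measure Ω}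
    [IsFiniteMeasure μ] {s : ℕ → Set Ω} (hs : ∀ n, MeasurableSet (s n)) (hs' : Antitone s)
    (h : ∀ᵐ ω ∂μ, ∃ n, ω ∉ s n) :
    Filter.Tendsto (fun n => μ.real (s n)) Filter.atTop (nhds 0) := by
  have inter_null : μ (⋂ n, s n) = 0 := by
    rw [measure_eq_zero_iff_ae_notMem]
    filter_upwards [h] with ω ⟨n, hn⟩ hω using hn (Set.mem_iInter.1 hω n)
  have tendsto_measure := tendsto_measure_iInter_atTop (fun n => (hs n).nullMeasurableSet (μ := μ))
    hs' ⟨0, measure_ne_top _ _⟩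
  rw [inter_null] at tendsto_measure
  exact (ENNReal.tendsto_toReal ENNReal.zero_ne_top).comp tendsto_measure

section Bond

variable {ω ω' : Bits} {a : V}

/-- The edge `{a, b}` is open and `a` is its lower or left end-vertex. The bits `(a, 0)` and
`(a, 1)` are the states of the edges joining `a` to `a + e1` and to `a + e2`. -/
def OpenFrom (ω : Bits) (a b : V) : Prop :=
  (b = a + e1 ∧ ω (a, 0) = true) ∨ (b = a + e2 ∧ ω (a, 1) = true)

/-- The graph of open edges. -/
def bond (ω : Bits) : SimpleGraph V where
  Adj a b := OpenFrom ω a b ∨ OpenFrom ω b a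
  symm := ⟨fun _ _ => Or.symm⟩
  loopless := ⟨fun a h => by simp [OpenFrom, e1, e2] at h⟩

lemma bond_adj_add_e1 : (bond ω).Adj a (a + e1) ↔ ω (a, 0) = true := by
  simp [bond, OpenFrom, e1, e2, add_assoc]

lemma bond_adj_add_e2 : (bond ω).Adj a (a + e2) ↔ ω (a, 1) = true := by
  simp [bond, OpenFrom, e1, e2, add_assoc]

lemma bond_le_lattice (ω : Bits) : bond ω ≤ lattice := fun a b h => by
  refine sqAdj_iff.2 ?_
  rcases h with (⟨h, -⟩ | ⟨h, -⟩) | (⟨h, -⟩ | ⟨h, -⟩)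
  all_goals simp only [h, true_or, or_true]

lemma bond_mono (h : ∀ a, ∀ k ≠ 2, ω (a, k) = true → ω' (a, k) = true) : bond ω ≤ bond ω' := by
  have openFrom_mono {a b : V} : OpenFrom ω a b → OpenFrom ω' a b :=
    Or.imp (And.imp_right (h a 0 (by decide))) (And.imp_right (h a 1 (by decide)))
  exact fun a b => Or.imp openFrom_mono openFrom_mono

lemma bond_vadd_adj (u : V) (ω : Bits) (a b : V) :
    (bond (u +ᵥ ω)).Adj a b ↔ (bond ω).Adj (a + u) (b + u) := by
  simp only [bond, OpenFrom, Bits.vadd_apply, add_right_comm _ u e1, add_right_comm _ u e2,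
    (add_left_injective u).eq_iff]

lemma measurableGraph_bond : MeasurableGraph bond := by
  have measurable_openFrom (a b : V) : Measurable fun ω => OpenFrom ω a b := by
    have measurable_isOpen (i : V × Fin 3) : Measurable fun ω : Bits => ω i = true :=
      measurableSet_setOfPred.1 (measurableSet_eq_fun (measurable_pi_apply i) measurable_const)
    exact (measurable_const.and (measurable_isOpen _)).or
      (measurable_const.and (measurable_isOpen _))
  exact fun a b => (measurable_openFrom a b).or (measurable_openFrom b a)

open Classical in
lemma isBurtonKeane_bond {ν : Fin 3 → Measure Bool} [∀ k, IsProbabilityMeasure (ν k)]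
    (hν : ∀ k, ν k {true} ≠ 0) : IsBurtonKeane (bitsMeasure ν) bond where
  le_lattice := bond_le_lattice
  measurable := measurableGraph_bond
  adj_vadd := bond_vadd_adj
  merging Q hQ := by
    filter_upwards [ae_forall_piecewise hQ fun _ => true] with ω hω n
    let S : Finset (V × Fin 3) := box n ×ˢ Finset.univ
    refine ⟨S.piecewise (fun _ => true) ω, box n, hω S fun i _ => hν i.2, subset_rfl, ?_, ?_, ?_⟩
    · refine bond_mono fun a k _ h => ?_
      simp [Finset.piecewise, h]
    · rintro a b ⟨hab, ha, hb⟩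
      have unchanged (c : V) (hc : c ∉ box n) (k) :
          S.piecewise (fun _ => true) ω (c, k) = ω (c, k) := by simp [S, Finset.piecewise, hc]
      simpa only [bond, OpenFrom, unchanged a ha, unchanged b hb] using hab
    · intro a ha b hb
      refine restrict_box_reachable (fun c hc _ => ?_) (fun c hc _ => ?_) ha hb
      · simp [bond_adj_add_e1, S, hc]
      · simp [bond_adj_add_e2, S, hc]

/-- The law of a fair coin. -/
noncomputable abbrev fair : Measure Bool := (PMF.uniformOfFintype Bool).toMeasure

/-- The law of independent fair bits, which describes bond percolation of density `1/2`. -/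
noncomputable abbrev fairBits : Measure Bits := bitsMeasure fun _ => fair

end Bond

section Rotation

/-- Rotation of the lattice by a quarter turn. -/
def rot : V ≃+ V where
  toFun v := (-v.2, v.1)
  invFun v := (v.2, -v.1)
  left_inv v := by simp
  right_inv v := by simp
  map_add' v w := Prod.ext (neg_add v.2 w.2) rfl

lemma rot_e1 : rot e1 = e2 := rfl

lemma rot_e2 : rot e2 = -e1 := rfl

lemma rot_mem_box {n : ℕ} {v : V} : rot v ∈ box n ↔ v ∈ box n := by
  simp only [mem_box, rot, AddEquiv.coe_mk, Equiv.coe_fn_mk]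
  omega

lemma rot_image_box (n : ℕ) : rot '' (box n : Set V) = box n := by
  ext v
  obtain ⟨w, rfl⟩ := rot.surjective v
  simp [rot.injective.mem_set_image, rot_mem_box]

/-- The effect of `rot` on the indices of bits. -/
def rotIndex : V × Fin 3 → V × Fin 3
  | (a, 0) => (rot a, 1)
  | (a, 1) => (rot a - e1, 0)
  | (a, 2) => (rot a, 2)

lemma injective_rotIndex : Function.Injective rotIndex := by
  rintro ⟨a, i⟩ ⟨b, j⟩ h
  fin_cases i <;> fin_cases j <;> simp_all [rotIndex]

/-- The configuration rotated back by a quarter turn. -/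
def rotBits (ω : Bits) : Bits := fun i => ω (rotIndex i)

lemma measurePreserving_rotBits (ν : Measure Bool) [IsProbabilityMeasure ν] :
    MeasurePreserving rotBits (bitsMeasure fun _ => ν) (bitsMeasure fun _ => ν) :=
  measurePreserving_infinitePi_comp injective_rotIndex fun _ => rfl

/-- Rotation as an isomorphism of bond configurations. -/
def rotBond (ω : Bits) : bond (rotBits ω) ≃g bond ω where
  toEquiv := rot.toEquiv
  map_rel_iff' {a b} := by
    have openFrom_iff (a b : V) : OpenFrom (rotBits ω) a b ↔
        (rot b = rot a + e2 ∧ ω (rot a, 1) = true) ∨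
          (rot a = rot b + e1 ∧ ω (rot b, 0) = true) := by
      have h₁ : b = a + e1 ↔ rot b = rot a + e2 := by
        rw [← rot_e1, ← map_add, rot.injective.eq_iff]
      have h₂ : b = a + e2 ↔ rot a = rot b + e1 := by
        rw [← rot.injective.eq_iff, map_add, rot_e2, ← sub_eq_add_neg, eq_sub_iff_add_eq, eq_comm]
      rw [← h₁, ← h₂]
      refine or_congr Iff.rfl (and_congr_right fun h => ?_)
      rw [← sub_eq_of_eq_add (h₂.1 h)]
      rfl
    change OpenFrom ω (rot a) (rot b) ∨ OpenFrom ω (rot b) (rot a) ↔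
      OpenFrom (rotBits ω) a b ∨ OpenFrom (rotBits ω) b a
    rw [openFrom_iff a b, openFrom_iff b a]
    unfold OpenFrom
    tauto

lemma restrict_bond_rotBits_reachable (ω : Bits) (n : ℕ) (a b : V) :
    (restrict (bond (rotBits ω)) (box n)).Reachable a b ↔
      (restrict (bond ω) (box n)).Reachable (rot a) (rot b) := by
  rw [← (restrictIso (rotBond ω) (box n)).reachable_iff]
  change (restrict (bond ω) (rot '' (box n : Set V))).Reachable _ _ ↔ _
  rw [rot_image_box]
  rfl

end Rotation

section Events

variable {ω ω' : Bits} {a b d x : V} {k n : ℕ}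

/-- A vertex of `box k` is joined inside `box n` to a vertex at which an open edge in direction `d`
leaves `box n`. -/
def exitEvent (d : V) (k n : ℕ) : Set Bits :=
  {ω | ∃ x ∈ box k, ∃ v ∈ box n, (restrict (bond ω) (box n)).Reachable x v ∧
    (bond ω).Adj v (v + d) ∧ v + d ∉ box n}

/-- Two vertices joined inside `box n` at which open edges leave `box n` in the directions `-d` and
`d`. -/
def crossingEvent (d : V) (n : ℕ) : Set Bits :=
  {ω | ∃ v ∈ box n, ∃ w ∈ box n, (restrict (bond ω) (box n)).Reachable v w ∧
    ((bond ω).Adj v (v - d) ∧ v - d ∉ box n) ∧ (bond ω).Adj w (w + d) ∧ w + d ∉ box n}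

/-- The clusters of `x` and `y` leave `box n` but `x` and `y` are not joined inside `box n`. -/
def disjointArms (x y : V) (n : ℕ) : Set Bits :=
  {ω | (∃ z ∉ box n, (bond ω).Reachable x z) ∧ (∃ z ∉ box n, (bond ω).Reachable y z) ∧
    ¬ (restrict (bond ω) (box n)).Reachable x y}

/-- The indices of the bits on which the edges meeting `box n` depend. -/
noncomputable def bitIndices (n : ℕ) : Finset (V × Fin 3) := box (n + 1) ×ˢ Finset.univ

lemma bond_adj_congr (h : ∀ i ∈ bitIndices n, ω i = ω' i) (ha : a ∈ box n) :
    (bond ω).Adj a b ↔ (bond ω').Adj a b := by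
  have bits_eq {c : V} (hc : c ∈ box (n + 1)) (k : Fin 3) : ω (c, k) = ω' (c, k) :=
    h _ (Finset.mem_product.2 ⟨hc, Finset.mem_univ k⟩)
  have aux {ω ω' : Bits} (heq : ∀ c ∈ box (n + 1), ∀ k, ω (c, k) = ω' (c, k))
      (hab : (bond ω).Adj a b) : (bond ω').Adj a b := by
    have hb := mem_box_succ_of_adj (bond_le_lattice ω hab) ha
    have ha := box_mono n.le_succ ha
    simpa only [bond, OpenFrom, heq a ha, heq b hb] using hab
  exact ⟨aux fun c hc k => bits_eq hc k, aux fun c hc k => (bits_eq hc k).symm⟩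

lemma restrict_bond_congr (h : ∀ i ∈ bitIndices n, ω i = ω' i) :
    restrict (bond ω) (box n) = restrict (bond ω') (box n) := by
  ext a b
  exact ⟨fun ⟨hab, ha, hb⟩ => ⟨(bond_adj_congr h ha).1 hab, ha, hb⟩,
    fun ⟨hab, ha, hb⟩ => ⟨(bond_adj_congr h ha).2 hab, ha, hb⟩⟩

lemma exitEvent_mem_measurableCylinders (d : V) (k n : ℕ) :
    exitEvent d k n ∈ measurableCylinders fun _ => Bool := by
  refine mem_measurableCylinders_of_dependsOn (s := bitIndices n) fun ω ω' h => propext ?_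
  refine exists_congr fun x => and_congr_right fun _ => exists_congr fun v =>
    and_congr_right fun hv => ?_
  rw [restrict_bond_congr h, bond_adj_congr h hv]

lemma measurableSet_exitEvent (d : V) (k n : ℕ) : MeasurableSet (exitEvent d k n) :=
  .of_mem_measurableCylinders (exitEvent_mem_measurableCylinders d k n)

lemma measurableSet_crossingEvent (d : V) (n : ℕ) : MeasurableSet (crossingEvent d n) := by
  refine MeasurableSet.of_mem_measurableCylinders
    (mem_measurableCylinders_of_dependsOn (s := bitIndices n) fun ω ω' h => propext ?_)
  refine exists_congr fun v => and_congr_right fun hv => exists_congr fun w =>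
    and_congr_right fun hw => ?_
  rw [restrict_bond_congr h, bond_adj_congr h hv, bond_adj_congr h hw]

lemma measurableSet_disjointArms (x y : V) (n : ℕ) : MeasurableSet (disjointArms x y n) :=
  have measurable_exists (x : V) : Measurable fun ω => ∃ z ∉ box n, (bond ω).Reachable x z :=
    .exists fun z => measurable_const.and (measurableGraph_bond.reachable x z)
  measurableSet_setOfPred.2 ((measurable_exists x).and ((measurable_exists y).and
    ((measurableGraph_bond.restrict _).reachable x y).not))

lemma isUpperSet_exitEvent (d : V) (k n : ℕ) : IsUpperSet (exitEvent d k n) := by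
  rintro ω ω' h ⟨x, hx, v, hv, hxv, hvd, hd⟩
  have hmono : bond ω ≤ bond ω' :=
    bond_mono fun a i _ hai => Bool.eq_true_of_true_le (hai ▸ h (a, i))
  exact ⟨x, hx, v, hv, hxv.mono (restrict_mono hmono subset_rfl), hmono hvd, hd⟩

lemma antitone_disjointArms (x y : V) : Antitone (disjointArms x y) := by
  rintro m n h ω ⟨⟨z, hz, hxz⟩, ⟨z', hz', hyz'⟩, hxy⟩
  exact ⟨⟨z, fun hz₁ => hz (box_mono h hz₁), hxz⟩, ⟨z', fun hz₁ => hz' (box_mono h hz₁), hyz'⟩,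
    fun hxy₁ => hxy (hxy₁.mono (restrict_mono le_rfl (Finset.coe_subset.2 (box_mono h))))⟩

lemma tendsto_disjointArms {ν : Fin 3 → Measure Bool} [∀ k, IsProbabilityMeasure (ν k)]
    (hν : ∀ k, ν k {true} ≠ 0) (x y : V) :
    Filter.Tendsto (fun n => (bitsMeasure ν).real (disjointArms x y n)) Filter.atTop (nhds 0) := by
  refine tendsto_measureReal_zero_of_antitone (measurableSet_disjointArms x y)
    (antitone_disjointArms x y) ?_
  filter_upwards [(isBurtonKeane_bond hν).ae_unique] with ω hunique
  by_contra! harms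
  have hxy := hunique x y (cluster_infinite_of_forall_exists_notMem_box fun n => (harms n).1)
    (cluster_infinite_of_forall_exists_notMem_box fun n => (harms n).2.1)
  obtain ⟨n, hn⟩ := exists_restrict_box_reachable hxy
  exact (harms n).2.2 hn

/-- The four directions of edges. -/
def directions : Finset V := {e1, e2, -e1, -e2}

lemma exists_mem_exitEvent (hkn : k ≤ n) (hx : x ∈ box k) (h : (cluster (bond ω) x).Infinite) :
    ∃ d ∈ directions, ω ∈ exitEvent d k n := by
  obtain ⟨z, hxz, hz⟩ := h.exists_notMem_finset (box n)
  obtain ⟨v, hv, w, hw, hxv, hvw⟩ := exists_exit hxz (box_mono hkn hx) hz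
  obtain ⟨d, hd, rfl⟩ : ∃ d ∈ directions, w = v + d := by
    refine ⟨w - v, ?_, (add_sub_cancel v w).symm⟩
    rcases sqAdj_iff.1 (bond_le_lattice ω hvw) with rfl | rfl | rfl | rfl <;> simp [directions]
  exact ⟨d, hd, x, hx, v, hv, hxv, hvw, hw⟩

lemma mem_crossingEvent_of_mem_exitEvent (h : ω ∈ exitEvent d k n) (h' : ω ∈ exitEvent (-d) k n)
    (harms : ∀ x ∈ box k, ∀ y ∈ box k, ω ∉ disjointArms x y n) : ω ∈ crossingEvent d n := by
  obtain ⟨x, hx, v, hv, hxv, hvd, hd⟩ := h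
  obtain ⟨y, hy, w, hw, hyw, hwd, hd'⟩ := h'
  have hxy : (restrict (bond ω) (box n)).Reachable x y := by
    by_contra hxy
    exact harms x hx y hy ⟨⟨_, hd, (hxv.mono restrict_le).trans hvd.reachable⟩,
      ⟨_, hd', (hyw.mono restrict_le).trans hwd.reachable⟩, hxy⟩
  rw [← sub_eq_add_neg] at hwd hd'
  exact ⟨w, hw, v, hv, hyw.symm.trans (hxy.symm.trans hxv), ⟨hwd, hd'⟩, hvd, hd⟩

end Events

section CrossingProbability

variable (ν : Measure Bool) [IsProbabilityMeasure ν] (d : V) (k n : ℕ)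

lemma preimage_rotBits_exitEvent : rotBits ⁻¹' exitEvent d k n = exitEvent (rot d) k n := by
  ext ω
  symm
  refine rot.surjective.exists.trans (exists_congr fun x => and_congr rot_mem_box
    (rot.surjective.exists.trans (exists_congr fun v => and_congr rot_mem_box ?_)))
  rw [restrict_bond_rotBits_reachable, ← map_add, rot_mem_box, ← (rotBond ω).map_adj_iff]
  rfl

lemma preimage_rotBits_crossingEvent :
    rotBits ⁻¹' crossingEvent d n = crossingEvent (rot d) n := by
  ext ω
  symm
  refine rot.surjective.exists.trans (exists_congr fun v => and_congr rot_mem_box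
    (rot.surjective.exists.trans (exists_congr fun w => and_congr rot_mem_box ?_)))
  rw [restrict_bond_rotBits_reachable, ← map_add, ← map_sub, rot_mem_box, rot_mem_box,
    ← (rotBond ω).map_adj_iff, ← (rotBond ω).map_adj_iff]
  rfl

lemma measureReal_exitEvent_rot :
    (bitsMeasure fun _ => ν).real (exitEvent (rot d) k n) =
      (bitsMeasure fun _ => ν).real (exitEvent d k n) := by
  rw [← preimage_rotBits_exitEvent, (measurePreserving_rotBits ν).measureReal_preimage
    (measurableSet_exitEvent d k n).nullMeasurableSet]

lemma measureReal_crossingEvent_rot :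
    (bitsMeasure fun _ => ν).real (crossingEvent (rot d) n) =
      (bitsMeasure fun _ => ν).real (crossingEvent d n) := by
  rw [← preimage_rotBits_crossingEvent, (measurePreserving_rotBits ν).measureReal_preimage
    (measurableSet_crossingEvent d n).nullMeasurableSet]

variable {d} in
lemma measureReal_exitEvent_eq (hd : d ∈ directions) :
    (bitsMeasure fun _ => ν).real (exitEvent d k n) =
      (bitsMeasure fun _ => ν).real (exitEvent e1 k n) := by
  have hrot := measureReal_exitEvent_rot ν
  simp only [directions, Finset.mem_insert, Finset.mem_singleton] at hd
  rcases hd with rfl | rfl | rfl | rfl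
  · rfl
  · exact hrot e1 k n
  · exact (hrot e2 k n).trans (hrot e1 k n)
  · exact (hrot (rot e2) k n).trans ((hrot e2 k n).trans (hrot e1 k n))

/-- No infinite cluster meets `box k`. -/
def boxFiniteEvent (k : ℕ) : Set Bits := {ω | ∀ x ∈ box k, ¬ (cluster (bond ω) x).Infinite}

lemma measurableSet_boxFiniteEvent : MeasurableSet (boxFiniteEvent k) :=
  measurableSet_setOfPred.2 <| .forall fun x => .forall fun _ =>
    (measurableGraph_bond.infinite_cluster x).not

variable {k n} in
/-- The square-root trick for the four directions in which a cluster may leave `box n`. -/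
lemma one_sub_exitEvent_pow_le (hkn : k ≤ n) :
    (1 - (bitsMeasure fun _ => ν).real (exitEvent e1 k n)) ^ 4 ≤
      (bitsMeasure fun _ => ν).real (boxFiniteEvent k) := by
  have hcompl : (⋃ d ∈ directions, exitEvent d k n)ᶜ ⊆ boxFiniteEvent k := fun ω hω x hx hinf => by
    obtain ⟨d, hd, hωd⟩ := exists_mem_exitEvent hkn hx hinf
    exact hω (Set.mem_biUnion hd hωd)
  have hmeas : MeasurableSet (⋃ d ∈ directions, exitEvent d k n) :=
    directions.measurableSet_biUnion fun d _ => measurableSet_exitEvent d k n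
  calc _ = ∏ d ∈ directions, (1 - (bitsMeasure fun _ => ν).real (exitEvent d k n)) := by
        rw [Finset.prod_congr rfl fun d hd => by rw [measureReal_exitEvent_eq ν k n hd],
          Finset.prod_const]
        rfl
    _ ≤ 1 - (bitsMeasure fun _ => ν).real (⋃ d ∈ directions, exitEvent d k n) :=
        prod_one_sub_le_one_sub_biUnion _ _ (fun d _ => exitEvent_mem_measurableCylinders d k n)
          fun d _ => isUpperSet_exitEvent d k n
    _ ≤ _ := by
        rw [← probReal_compl_eq_one_sub hmeas]
        exact measureReal_mono hcompl

variable {ν}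

lemma exists_nine_tenths_lt_exitEvent
    (h : ∀ᵐ ω ∂(bitsMeasure fun _ => ν), ∃ x, (cluster (bond ω) x).Infinite) :
    ∃ k, ∀ n ≥ k, ∀ d ∈ directions, 9 / 10 < (bitsMeasure fun _ => ν).real (exitEvent d k n) := by
  have htendsto := tendsto_measureReal_zero_of_antitone (measurableSet_boxFiniteEvent ·)
    (fun k m hkm ω hω x hx => hω x (box_mono hkm hx)) <| by
      filter_upwards [h] with ω ⟨x, hx⟩
      obtain ⟨k, hk⟩ := exists_subset_box {x}
      exact ⟨k, fun hω => hω x (hk (Finset.mem_singleton_self x)) hx⟩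
  obtain ⟨k, hk⟩ := (htendsto.eventually_lt_const (show (0 : ℝ) < (1 / 10) ^ 4 by norm_num)).exists
  refine ⟨k, fun n hkn d hd => ?_⟩
  rw [measureReal_exitEvent_eq ν k n hd]
  have hpow := lt_of_pow_lt_pow_left₀ 4 (by norm_num)
    ((one_sub_exitEvent_pow_le ν hkn).trans_lt hk)
  linarith

lemma exists_half_lt_crossingEvent (hν : ν {true} ≠ 0)
    (h : ∀ᵐ ω ∂(bitsMeasure fun _ => ν), ∃ x, (cluster (bond ω) x).Infinite) :
    ∃ n, 1 / 2 < (bitsMeasure fun _ => ν).real (crossingEvent e1 n) := by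
  obtain ⟨k, hk⟩ := exists_nine_tenths_lt_exitEvent h
  let arms (n : ℕ) : Set Bits := ⋃ z ∈ box k ×ˢ box k, disjointArms z.1 z.2 n
  have harms : ∀ᶠ n in Filter.atTop, (bitsMeasure fun _ => ν).real (arms n) < 1 / 10 := by
    have hsum := tendsto_finsetSum (box k ×ˢ box k) fun z _ =>
      tendsto_disjointArms (fun _ => hν) z.1 z.2
    rw [Finset.sum_const_zero] at hsum
    filter_upwards [hsum.eventually_lt_const (show (0 : ℝ) < 1 / 10 by norm_num)] with n hn
    exact (measureReal_biUnion_finset_le _ _).trans_lt hn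
  obtain ⟨n, hn, hkn⟩ := (harms.and (Filter.eventually_ge_atTop k)).exists
  refine ⟨n, ?_⟩
  have hcover : (crossingEvent e1 n)ᶜ ⊆ (exitEvent e1 k n)ᶜ ∪ (exitEvent (-e1) k n)ᶜ ∪ arms n := by
    intro ω hω
    by_contra hω'
    simp only [arms, Set.mem_union, Set.mem_compl_iff, not_or, not_not, Set.mem_iUnion,
      Finset.mem_product, not_exists] at hω'
    exact hω (mem_crossingEvent_of_mem_exitEvent hω'.1.1 hω'.1.2
      fun x hx y hy => hω'.2 (x, y) ⟨hx, hy⟩)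
  have hle := (measureReal_mono (μ := bitsMeasure fun _ => ν) hcover).trans <|
    (measureReal_union_le _ _).trans (add_le_add_left (measureReal_union_le _ _) _)
  rw [probReal_compl_eq_one_sub (measurableSet_crossingEvent e1 n),
    probReal_compl_eq_one_sub (measurableSet_exitEvent _ _ _),
    probReal_compl_eq_one_sub (measurableSet_exitEvent _ _ _)] at hle
  have hright := hk n hkn e1 (by simp [directions])
  have hleft := hk n hkn (-e1) (by simp [directions])
  linarith

end CrossingProbability

section Duality

variable {ω : Bits} {n : ℕ} {a b c : V} {F G : V → ℤ}

/-- The index of the primal edge crossed by a dual edge. The dual vertex indexed by `a` is the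
centre `(a.1 + 1/2, a.2 + 1/2)` of a face. -/
def dualIndex : V × Fin 3 → V × Fin 3
  | (a, 0) => (a + e1, 1)
  | (a, 1) => (a + e2, 0)
  | (a, 2) => (a, 2)

/-- The dual configuration: a dual edge is open when the primal edge it crosses is closed. -/
def dualBits (ω : Bits) : Bits := fun i => !ω (dualIndex i)

lemma dualBits_zero : dualBits ω (a, 0) = true ↔ ω (a + e1, 1) = false :=
  by simp [dualBits, dualIndex]

lemma dualBits_one : dualBits ω (a, 1) = true ↔ ω (a + e2, 0) = false :=
  by simp [dualBits, dualIndex]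

lemma injective_dualIndex : Function.Injective dualIndex := by
  rintro ⟨a, i⟩ ⟨b, j⟩ h
  fin_cases i <;> fin_cases j <;> simp_all [dualIndex]

lemma map_not_fair : fair.map not = fair := by
  refine Measure.ext_of_singleton fun b => ?_
  have hpre : not ⁻¹' {b} = {!b} := by ext c; simp [Bool.not_eq_eq_eq_not]
  rw [Measure.map_apply (measurable_of_finite not) (measurableSet_singleton b), hpre]
  simp

lemma measurePreserving_dualBits : MeasurePreserving dualBits fairBits fairBits := by
  have hnot : MeasurePreserving (fun (ω : Bits) i => !ω i) fairBits fairBits := by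
    refine ⟨by fun_prop, ?_⟩
    rw [fairBits, bitsMeasure, Measure.infinitePi_map_pi _ fun _ => measurable_of_finite not]
    simp_rw [map_not_fair]
  exact hnot.comp (measurePreserving_infinitePi_comp injective_dualIndex fun _ => rfl)

/-- `F v` behaves as the signed number of upward crossings of the horizontal ray from `v` to the
left by a path of open dual edges from `a` to `b` inside the columns `[-n, n]`. Working with the
function `F` instead of a path avoids any appeal to planar topology. -/
structure IsFlux (ω : Bits) (n : ℕ) (a b : V) (F : V → ℤ) : Prop where
  left : ∀ v : V, v.1 ≤ -n → F v = 0
  right : ∀ v : V, n < v.1 → F v = (if v.2 ≤ b.2 then 1 else 0) - if v.2 ≤ a.2 then 1 else 0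
  horizontal : ∀ v : V, ω (v, 0) = true → F (v + e1) = F v
  vertical : ∀ v : V, ω (v, 1) = true → F v - F (v + e2) =
    (if b.2 = v.2 ∧ b.1 < v.1 then 1 else 0) - if a.2 = v.2 ∧ a.1 < v.1 then 1 else 0

namespace IsFlux

lemma refl (ω : Bits) (n : ℕ) (a : V) : IsFlux ω n a a 0 := by
  constructor <;> simp

lemma symm (h : IsFlux ω n a b F) : IsFlux ω n b a (-F) where
  left v hv := by simp [h.left v hv]
  right v hv := by simp [h.right v hv]
  horizontal v hv := by simp [h.horizontal v hv]
  vertical v hv := by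
    have := h.vertical v hv
    simp only [Pi.neg_apply]
    linarith

lemma trans (h : IsFlux ω n a b F) (h' : IsFlux ω n b c G) : IsFlux ω n a c (F + G) where
  left v hv := by simp [h.left v hv, h'.left v hv]
  right v hv := by simp [h.right v hv, h'.right v hv]
  horizontal v hv := by simp [h.horizontal v hv, h'.horizontal v hv]
  vertical v hv := by
    have := h.vertical v hv
    have := h'.vertical v hv
    simp only [Pi.add_apply]
    linarith

lemma add_e1 (h : ω (a + e1, 1) = false) : IsFlux ω n a (a + e1) 0 where
  left v _ := rfl
  right v _ := by simp [e1]
  horizontal v _ := rfl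
  vertical v hv := by
    have hne : v ≠ a + e1 := by rintro rfl; simp [hv] at h
    simp only [ne_eq, Prod.ext_iff, e1, Prod.fst_add, Prod.snd_add, Pi.zero_apply] at hne ⊢
    split_ifs <;> omega

lemma add_e2 (h : ω (a + e2, 0) = false) (ha : -n ≤ a.1) (ha' : a.1 ≤ n) :
    IsFlux ω n a (a + e2) fun v => if v.2 = a.2 + 1 ∧ a.1 < v.1 then 1 else 0 where
  left v hv := by
    simp only [ite_eq_right_iff]
    omega
  right v hv := by
    simp only [e2, Prod.snd_add]
    split_ifs <;> omega
  horizontal v hv := by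
    have hne : v ≠ a + e2 := by rintro rfl; simp [hv] at h
    simp only [ne_eq, Prod.ext_iff, e1, e2, Prod.fst_add, Prod.snd_add] at hne ⊢
    split_ifs <;> omega
  vertical v _ := by
    simp only [e2, Prod.fst_add, Prod.snd_add]
    split_ifs <;> omega

lemma eq_of_reachable {v w : V} (h : IsFlux ω n a b F) (ha : a.2 ≤ -n - 1) (hb : n ≤ b.2)
    (hvw : (restrict (bond ω) (box n)).Reachable v w) : F v = F w := by
  have eq_of_openFrom {v w : V} (hv : v ∈ box n) (hw : w ∈ box n) (hvw : OpenFrom ω v w) :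
      F w = F v := by
    rw [mem_box] at hv hw
    rcases hvw with ⟨rfl, hopen⟩ | ⟨rfl, hopen⟩
    · exact h.horizontal v hopen
    · have hrow := h.vertical v hopen
      simp only [e2, Prod.snd_add] at hw
      rw [if_neg (by omega), if_neg (by omega)] at hrow
      linarith
  rw [SimpleGraph.reachable_iff_reflTransGen] at hvw
  induction hvw with
  | refl => rfl
  | tail _ hadj ih =>
    obtain ⟨hopen | hopen, hv, hw⟩ := hadj
    · exact ih.trans (eq_of_openFrom hv hw hopen).symm
    · exact ih.trans (eq_of_openFrom hw hv hopen)

end IsFlux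

lemma exists_isFlux_of_adj (hab : (bond (dualBits ω)).Adj a b) (ha : a ∈ box n) (hb : b ∈ box n) :
    ∃ F, IsFlux ω n a b F := by
  have exists_of_openFrom {a b : V} (ha : a ∈ box n) (hab : OpenFrom (dualBits ω) a b) :
      ∃ F, IsFlux ω n a b F := by
    rcases hab with ⟨rfl, hopen⟩ | ⟨rfl, hopen⟩
    · exact ⟨_, .add_e1 (dualBits_zero.1 hopen)⟩
    · exact ⟨_, .add_e2 (dualBits_one.1 hopen) (mem_box.1 ha).1.1 (mem_box.1 ha).1.2⟩
  rcases hab with hab | hba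
  · exact exists_of_openFrom ha hab
  · obtain ⟨F, hF⟩ := exists_of_openFrom hb hba
    exact ⟨_, hF.symm⟩

lemma exists_isFlux (hab : (restrict (bond (dualBits ω)) (box n)).Reachable a b) :
    ∃ F, IsFlux ω n a b F := by
  rw [SimpleGraph.reachable_iff_reflTransGen] at hab
  induction hab with
  | refl => exact ⟨_, .refl ω n a⟩
  | tail _ hadj ih =>
    obtain ⟨F, hF⟩ := ih
    obtain ⟨G, hG⟩ := exists_isFlux_of_adj hadj.1 hadj.2.1 hadj.2.2
    exact ⟨_, hF.trans hG⟩

/-- A dual bottom-top crossing has flux `0` on the left of the box and flux `1` on the right, while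
the flux is constant along primal paths. -/
lemma disjoint_crossingEvent_preimage_dualBits (n : ℕ) :
    Disjoint (crossingEvent e1 n) (dualBits ⁻¹' crossingEvent e2 n) := by
  rw [Set.disjoint_left]
  rintro ω ⟨v, hv, w, hw, hvw, ⟨-, hv'⟩, hopen, hw'⟩ ⟨a, ha, b, hb, hab, ⟨hopen', ha'⟩, -, hb'⟩
  have hentry : dualBits ω (a - e2, 1) = true := by
    rw [← bond_adj_add_e2, sub_add_cancel]
    exact hopen'.symm
  simp only [mem_box, e1, e2, Prod.fst_add, Prod.fst_sub, Prod.snd_add, Prod.snd_sub]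
    at hv hv' hw hw' ha ha' hb hb'
  obtain ⟨F, hF⟩ := exists_isFlux hab
  have hflux := (IsFlux.add_e2 (dualBits_one.1 hentry) (n := n) (by simp [e2]; omega)
    (by simp [e2]; omega)).trans (sub_add_cancel a e2 ▸ hF)
  have hleft := hflux.left v (by omega)
  have hright := hflux.right (w + e1) (by simp [e1]; omega)
  rw [hflux.horizontal w (bond_adj_add_e1.1 hopen),
    ← hflux.eq_of_reachable (by simp [e2]; omega) (by omega) hvw, hleft] at hright
  simp only [e1, e2, Prod.snd_add, Prod.snd_sub] at hright
  split_ifs at hright <;> omega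

lemma ae_not_exists_infinite_cluster_fairBits :
    ∀ᵐ ω ∂fairBits, ¬ ∃ x, (cluster (bond ω) x).Infinite := by
  have hfair : fair {true} ≠ 0 := by simp
  refine (isBurtonKeane_bond fun _ => hfair).ae_exists_infinite_or_ae_not.resolve_left fun h => ?_
  obtain ⟨n, hn⟩ := exists_half_lt_crossingEvent hfair h
  have hdual : fairBits.real (dualBits ⁻¹' crossingEvent e2 n) =
      fairBits.real (crossingEvent e1 n) := by
    rw [measurePreserving_dualBits.measureReal_preimage
      (measurableSet_crossingEvent e2 n).nullMeasurableSet]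
    exact measureReal_crossingEvent_rot fair e1 n
  have hle : fairBits.real (crossingEvent e1 n ∪ dualBits ⁻¹' crossingEvent e2 n) ≤ 1 :=
    measureReal_le_one
  rw [measureReal_union (disjoint_crossingEvent_preimage_dualBits n)
    (measurePreserving_dualBits.measurable (measurableSet_crossingEvent e2 n)), hdual] at hle
  linarith

end Duality

section BinaryDigits

variable {x : ℝ} {n : ℕ}

lemma boolOf_iff {P : Prop} : boolOf P = true ↔ P := by
  simp [boolOf]

lemma bit_iff : bit n x = true ↔ ⌊x * 2 ^ (n + 1)⌋ % 2 = 1 :=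
  boolOf_iff

lemma bit_succ (n : ℕ) (x : ℝ) : bit (n + 1) x = bit n (2 * x) := by
  rw [bit, bit, pow_succ' 2 (n + 1), mul_left_comm, mul_assoc]

lemma bit_sub_intCast (n : ℕ) (x : ℝ) (m : ℤ) : bit n (x - m) = bit n x := by
  have hfloor : ⌊(x - m) * 2 ^ (n + 1)⌋ = ⌊x * 2 ^ (n + 1)⌋ - m * 2 ^ n * 2 := by
    rw [← Int.floor_sub_intCast]
    push_cast
    ring_nf
  rw [bit, bit, hfloor, Int.sub_mul_emod_self_right]

lemma measurable_bit (n : ℕ) : Measurable (bit n) := by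
  have hfloor : Measurable fun x : ℝ => ⌊x * 2 ^ (n + 1)⌋ :=
    Int.measurable_floor.comp (measurable_id.mul_const _)
  exact (measurable_of_countable fun z : ℤ => boolOf (z % 2 = 1)).comp hfloor

lemma bit_zero_iff (hx : x ∈ Set.Ico (0 : ℝ) 1) : bit 0 x = true ↔ 1 ≤ 2 * x := by
  have h0 : 0 ≤ ⌊2 * x⌋ := Int.floor_nonneg.2 (by linarith [hx.1])
  have h2 : ⌊2 * x⌋ < 2 := Int.floor_lt.2 (by push_cast; linarith [hx.2])
  have h1 : 1 ≤ ⌊2 * x⌋ ↔ 1 ≤ 2 * x := by rw [Int.le_floor, Int.cast_one]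
  rw [bit_iff, zero_add, pow_one, mul_comm, ← h1]
  omega

lemma mem_Ico_and_bit_zero_eq_iff {b : Bool} :
    x ∈ Set.Ico (0 : ℝ) 1 ∧ bit 0 x = b ↔ 2 * x - b.toNat ∈ Set.Ico (0 : ℝ) 1 := by
  have hbit : x ∈ Set.Ico (0 : ℝ) 1 ∧ bit 0 x = b ↔ x ∈ Set.Ico (0 : ℝ) 1 ∧ (1 ≤ 2 * x ↔ b) :=
    and_congr_right fun hx => by rw [← bit_zero_iff hx, Bool.coe_iff_coe]
  rw [hbit]
  cases b <;> simp only [Set.mem_Ico, Bool.toNat_true, Bool.toNat_false, Nat.cast_one,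
    Nat.cast_zero, Bool.false_eq_true, iff_false, iff_true, not_le]
  · grind
  · grind

lemma base_eq_restrict_Ico : base = volume.restrict (Set.Ico 0 1) :=
  restrict_Ico_eq_restrict_Ioc.symm

instance : IsProbabilityMeasure base := ⟨by simp [base]⟩

/-- The first digit is a fair coin independent of `2 * x` modulo `1`. -/
lemma base_bit_zero_inter (s : Set Bool) {A : Set ℝ} (hA : MeasurableSet A)
    (hA' : ∀ (x : ℝ) (m : ℤ), x - m ∈ A ↔ x ∈ A) :
    base (bit 0 ⁻¹' s ∩ (2 * ·) ⁻¹' A) = fair s * base A := by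
  have hdouble : MeasurableSet ((2 * ·) ⁻¹' A : Set ℝ) := measurable_const_mul 2 hA
  have hlaw : (base.restrict ((2 * ·) ⁻¹' A)).map (bit 0) = base A • fair := by
    refine Measure.ext_of_singleton fun b => ?_
    have hset : bit 0 ⁻¹' {b} ∩ (2 * ·) ⁻¹' A ∩ Set.Ico 0 1 =
        (2 * ·) ⁻¹' ((· + -(b.toNat : ℝ)) ⁻¹' (A ∩ Set.Ico 0 1)) := by
      ext x
      have hperiodic : 2 * x - b.toNat ∈ A ↔ 2 * x ∈ A := by
        simpa only [Int.cast_natCast] using hA' (2 * x) b.toNat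
      have hdigit := mem_Ico_and_bit_zero_eq_iff (x := x) (b := b)
      simp only [Set.mem_inter_iff, Set.mem_preimage, Set.mem_singleton_iff, ← sub_eq_add_neg]
      tauto
    rw [Measure.map_apply (measurable_bit 0) (measurableSet_singleton b),
      Measure.restrict_apply' hdouble, base_eq_restrict_Ico,
      Measure.restrict_apply' measurableSet_Ico, hset, Real.volume_preimage_mul_left two_ne_zero,
      measure_preimage_add_right, Measure.restrict_apply' measurableSet_Ico]
    simp [mul_comm]
  have hs : MeasurableSet s := .of_discrete
  rw [← Measure.restrict_apply' hdouble, ← Measure.map_apply (measurable_bit 0) hs, hlaw]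
  exact mul_comm _ _

lemma base_forall_bit_mem (n : ℕ) (t : ℕ → Set Bool) :
    base {x | ∀ i < n, bit i x ∈ t i} = ∏ i ∈ Finset.range n, fair (t i) := by
  induction n generalizing t with
  | zero => simp
  | succ n ih =>
    have hset : {x | ∀ i < n + 1, bit i x ∈ t i} =
        bit 0 ⁻¹' t 0 ∩ (2 * ·) ⁻¹' {x | ∀ i < n, bit i x ∈ t (i + 1)} := by
      ext x
      exact Nat.forall_lt_succ_left.trans (by simp [bit_succ])
    have hmeas : MeasurableSet {x | ∀ i < n, bit i x ∈ t (i + 1)} :=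
      measurableSet_setOfPred.2 <| .forall fun i => .forall fun _ =>
        measurableSet_setOfPred.1 (measurable_bit i .of_discrete)
    rw [hset, base_bit_zero_inter _ hmeas (by simp [bit_sub_intCast]), ih fun i => t (i + 1),
      Finset.prod_range_succ', mul_comm]

lemma map_bit_base : base.map (fun x n => bit n x) = Measure.infinitePi fun _ : ℕ => fair := by
  classical
  refine Measure.eq_infinitePi _ fun s t ht => ?_
  obtain ⟨n, hn⟩ := s.exists_nat_subset_range
  have hset : (fun (x : ℝ) n => bit n x) ⁻¹' (s : Set ℕ).pi t =
      {x | ∀ i < n, bit i x ∈ if i ∈ s then t i else Set.univ} := by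
    ext x
    refine forall_congr' fun i => ?_
    by_cases hi : i ∈ s
    · simp [hi, Finset.mem_range.1 (hn hi)]
    · simp [hi]
  rw [Measure.map_apply (measurable_pi_lambda _ measurable_bit)
    (.pi s.countable_toSet fun i _ => ht i), hset, base_forall_bit_mem, ← Finset.prod_subset hn]
  · exact Finset.prod_congr rfl fun i hi => by rw [if_pos hi]
  · intro i _ hi
    rw [if_neg hi, measure_univ]

end BinaryDigits

section Sample

variable {p r x : ℝ} {a b c d : V}

lemma eIdx_comm (a b : V) : eIdx a b = eIdx b a :=
  min_comm _ _

lemma eIdx_eq_eIdx (h : eIdx a b = eIdx c d) : (a = c ∧ b = d) ∨ (a = d ∧ b = c) := by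
  rcases min_choice (Encodable.encode (a, b)) (Encodable.encode (b, a)) with h₁ | h₁ <;>
  rcases min_choice (Encodable.encode (c, d)) (Encodable.encode (d, c)) with h₂ | h₂ <;>
  · rw [eIdx, eIdx, h₁, h₂, Encodable.encode_inj, Prod.mk.injEq] at h
    tauto

/-- The index of the uniform label which determines a bit. -/
noncomputable def labelIndex : V × Fin 3 → ℕ
  | (a, 0) => 2 * eIdx a (a + e1)
  | (a, 1) => 2 * eIdx a (a + e2)
  | (a, 2) => 2 * Encodable.encode a + 1

lemma injective_labelIndex : Function.Injective labelIndex := by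
  have edge_eq {a b d d' : V} (h : eIdx a (a + d) = eIdx b (b + d')) (hd : d + d' ≠ 0) :
      a = b ∧ d = d' := by
    rcases eIdx_eq_eIdx h with ⟨rfl, h⟩ | ⟨rfl, h⟩
    · exact ⟨rfl, add_left_cancel h⟩
    · rw [add_assoc, add_eq_left, add_comm] at h
      exact absurd h hd
  rintro ⟨a, i⟩ ⟨b, j⟩ h
  fin_cases i <;> fin_cases j <;> simp only [labelIndex] at h
  all_goals first | omega | skip
  · rw [(edge_eq (by omega : eIdx a (a + e1) = eIdx b (b + e1)) (by decide)).1]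
  · exact absurd (edge_eq (by omega : eIdx a (a + e1) = eIdx b (b + e2)) (by decide)).2 (by decide)
  · exact absurd (edge_eq (by omega : eIdx a (a + e2) = eIdx b (b + e1)) (by decide)).2 (by decide)
  · rw [(edge_eq (by omega : eIdx a (a + e2) = eIdx b (b + e2)) (by decide)).1]
  · rw [Encodable.encode_injective (by omega : Encodable.encode a = Encodable.encode b)]

/-- The binary digits of the uniform label which determines a bit. -/
noncomputable def labelDigits (x : ℝ) (i : V × Fin 3) (k : ℕ) : Bool :=
  bit (Nat.pair (labelIndex i) k) x

lemma measurable_labelDigits : Measurable labelDigits :=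
  measurable_pi_lambda _ fun _ => measurable_pi_lambda _ fun _ => measurable_bit _

lemma map_labelDigits_base : base.map labelDigits =
    Measure.infinitePi fun _ : V × Fin 3 => Measure.infinitePi fun _ : ℕ => fair := by
  let digitIndex (q : (V × Fin 3) × ℕ) : ℕ := Nat.pair (labelIndex q.1) q.2
  have hinj : Function.Injective digitIndex := fun q q' h =>
    have h := Nat.pair_eq_pair.1 h
    Prod.ext (injective_labelIndex h.1) h.2
  have hbit : Measurable fun (x : ℝ) n => bit n x := measurable_pi_lambda _ measurable_bit
  rw [← Measure.infinitePi_map_curry,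
    ← Measure.map_infinitePi_infinitePi_of_inj (P := fun _ : ℕ => fair) hinj, ← map_bit_base,
    Measure.map_map (by fun_prop) hbit,
    Measure.map_map (by fun_prop) ((by fun_prop : Measurable fun (b : ℕ → Bool) q =>
      b (digitIndex q)).comp hbit)]
  rfl

/-- The number with binary digits `b`. -/
noncomputable def binaryValue (b : ℕ → Bool) : ℝ :=
  ∑' k : ℕ, if b k then (2 : ℝ)⁻¹ ^ (k + 1) else 0

lemma summable_inv_two_pow_succ : Summable fun k : ℕ => (2 : ℝ)⁻¹ ^ (k + 1) :=
  (summable_nat_add_iff 1).2 (summable_geometric_of_lt_one (by norm_num) (by norm_num))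

lemma measurable_binaryValue : Measurable binaryValue := by
  refine (continuous_tsum (fun k => ?_) summable_inv_two_pow_succ fun k b => ?_).measurable
  · exact (continuous_of_discreteTopology (f := fun c : Bool =>
      if c then (2 : ℝ)⁻¹ ^ (k + 1) else 0)).comp (continuous_apply k)
  · split_ifs
    · rw [Real.norm_of_nonneg (by positivity)]
    · rw [norm_zero]; positivity

lemma half_le_binaryValue {b : ℕ → Bool} (h : b 0 = true) : 1 / 2 ≤ binaryValue b := by
  have hnonneg (k : ℕ) : 0 ≤ if b k then (2 : ℝ)⁻¹ ^ (k + 1) else 0 := by positivity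
  have hsummable : Summable fun k => if b k then (2 : ℝ)⁻¹ ^ (k + 1) else 0 :=
    summable_inv_two_pow_succ.of_nonneg_of_le hnonneg fun k => by split_ifs <;> simp
  simpa [h, binaryValue] using hsummable.le_tsum 0 fun k _ => hnonneg k

/-- Whether the number with binary digits `b` is below the threshold for bits of type `k`: `p` for
edges and `r` for vertices. -/
noncomputable def isBelow (p r : ℝ) (k : Fin 3) (b : ℕ → Bool) : Bool :=
  boolOf (binaryValue b < if k = 2 then r else p)

lemma measurable_isBelow (p r : ℝ) (k : Fin 3) : Measurable (isBelow p r k) :=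
  (measurable_of_countable boolOf).comp (measurableSet_setOfPred.1
    (measurableSet_lt measurable_binaryValue measurable_const))

/-- The law of the bits of type `k`, a Bernoulli measure. -/
noncomputable def bitLaw (p r : ℝ) (k : Fin 3) : Measure Bool :=
  (Measure.infinitePi fun _ : ℕ => fair).map (isBelow p r k)

instance (p r : ℝ) (k : Fin 3) : IsProbabilityMeasure (bitLaw p r k) :=
  Measure.isProbabilityMeasure_map (measurable_isBelow p r k).aemeasurable

/-- The states of edges and the colours attached to vertices, as functions of the uniform sample. -/
noncomputable def sampleBits (p r x : ℝ) : Bits := fun i => isBelow p r i.2 (labelDigits x i)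

lemma sampleBits_zero : sampleBits p r x (a, 0) = true ↔ edgeU a (a + e1) x < p :=
  boolOf_iff

lemma sampleBits_one : sampleBits p r x (a, 1) = true ↔ edgeU a (a + e2) x < p :=
  boolOf_iff

lemma sampleBits_two : sampleBits p r x (a, 2) = true ↔ vtxU a x < r :=
  boolOf_iff

lemma measurePreserving_sampleBits (p r : ℝ) :
    MeasurePreserving (sampleBits p r) base (bitsMeasure (bitLaw p r)) := by
  have hbelow : Measurable fun (b : V × Fin 3 → ℕ → Bool) i => isBelow p r i.2 (b i) :=
    measurable_pi_lambda _ fun i => (measurable_isBelow p r i.2).comp (measurable_pi_apply i)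
  refine ⟨hbelow.comp measurable_labelDigits, ?_⟩
  calc base.map (sampleBits p r)
      = (base.map labelDigits).map fun b i => isBelow p r i.2 (b i) :=
        (Measure.map_map hbelow measurable_labelDigits).symm
    _ = bitsMeasure (bitLaw p r) := by
        rw [map_labelDigits_base]
        exact Measure.infinitePi_map_pi (fun _ : V × Fin 3 => Measure.infinitePi fun _ => fair)
          (f := fun i => isBelow p r i.2) fun i => measurable_isBelow p r i.2

/-- Fair bits obtained from the leading digits of the labels: a label below `1 / 2` has leading
digit `0`. -/
noncomputable def sampleFairBits (x : ℝ) : Bits := fun i => !labelDigits x i 0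

lemma measurePreserving_sampleFairBits : MeasurePreserving sampleFairBits base fairBits := by
  have hdigit : Measurable fun b : ℕ → Bool => !b 0 := by fun_prop
  have hleading : Measurable fun (b : V × Fin 3 → ℕ → Bool) i => !b i 0 := by fun_prop
  have hlaw : (Measure.infinitePi fun _ : ℕ => fair).map (fun b => !b 0) = fair := by
    rw [← Function.comp_def, ← Measure.map_map (by fun_prop) (by fun_prop),
      (measurePreserving_eval_infinitePi (fun _ : ℕ => fair) 0).map_eq, map_not_fair]
  refine ⟨hleading.comp measurable_labelDigits, ?_⟩
  calc base.map sampleFairBits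
      = (base.map labelDigits).map fun b i => !b i 0 :=
        (Measure.map_map hleading measurable_labelDigits).symm
    _ = fairBits := by
        rw [map_labelDigits_base, Measure.infinitePi_map_pi _ fun _ => hdigit, hlaw]
        rfl

lemma bond_sampleBits_le (hp : p ≤ 1 / 2) (r x : ℝ) :
    bond (sampleBits p r x) ≤ bond (sampleFairBits x) := by
  refine bond_mono fun a k hk h => ?_
  have hlt := boolOf_iff.1 h
  rw [if_neg hk] at hlt
  by_contra hdigit
  have hge : 1 / 2 ≤ binaryValue (labelDigits x (a, k)) :=
    half_le_binaryValue (by simpa [sampleFairBits] using hdigit)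
  linarith

theorem ae_not_exists_infinite_cluster_bond (hp : p ≤ 1 / 2) (r : ℝ) :
    ∀ᵐ ω ∂bitsMeasure (bitLaw p r), ¬ ∃ x, (cluster (bond ω) x).Infinite := by
  have hmeas : MeasurableSet {ω | ¬ ∃ x, (cluster (bond ω) x).Infinite} :=
    measurableSet_setOfPred.2
      (Measurable.exists fun x => measurableGraph_bond.infinite_cluster x).not
  have hsample := measurePreserving_sampleBits p r
  have hfair := measurePreserving_sampleFairBits
  rw [← hsample.map_eq, ae_map_iff hsample.aemeasurable hmeas]
  have hfinite := ae_not_exists_infinite_cluster_fairBits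
  rw [← hfair.map_eq, ae_map_iff hfair.aemeasurable hmeas] at hfinite
  filter_upwards [hfinite] with x hx ⟨v, hv⟩
  exact hx ⟨v, hv.mono (cluster_mono (bond_sampleBits_le hp r x) v)⟩

lemma edgeCfg_eq_true_iff :
    edgeCfg SqAdj p x a b = true ↔ (bond (sampleBits p r x)).Adj a b := by
  have hcomm : edgeU b a x = edgeU a b x := by rw [edgeU, eIdx_comm, edgeU]
  have openFrom_iff (a b : V) : OpenFrom (sampleBits p r x) a b ↔
      (b = a + e1 ∨ b = a + e2) ∧ edgeU a b x < p := by
    rw [OpenFrom, sampleBits_zero, sampleBits_one, or_and_right]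
    exact or_congr (and_congr_right fun h => h ▸ Iff.rfl) (and_congr_right fun h => h ▸ Iff.rfl)
  rw [edgeCfg, Bool.and_eq_true, boolOf_iff, boolOf_iff, sqAdj_iff]
  change _ ↔ OpenFrom _ a b ∨ OpenFrom _ b a
  rw [openFrom_iff, openFrom_iff, hcomm]
  tauto

end Sample

section Representatives

variable {α β γ : Type*} [LinearOrder β] [LinearOrder γ] {f : α → β} {g : α → γ}
  {G : SimpleGraph α} {v v' w w' : α}

/-- `w` minimises `f` on the cluster of `v`. -/
def IsRep (f : α → β) (G : SimpleGraph α) (v w : α) : Prop :=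
  G.Reachable v w ∧ ∀ u, G.Reachable v u → f w ≤ f u

lemma IsRep.of_reachable (h : IsRep f G v w) (hv : G.Reachable v v') : IsRep f G v' w :=
  ⟨hv.symm.trans h.1, fun u hu => h.2 u (hv.trans hu)⟩

lemma IsRep.eq (hf : Function.Injective f) (h : IsRep f G v w) (h' : IsRep f G v w') : w = w' :=
  hf ((h.2 w' h'.1).antisymm (h'.2 w h.1))

lemma exists_isRep (f : α → β) (hv : (cluster G v).Finite) : ∃ w, IsRep f G v w :=
  Set.exists_min_image (cluster G v) f hv ⟨v, .rfl⟩

open Classical in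
/-- The vertex minimising `f` on the cluster of `v`, or `v` itself if there is none. -/
noncomputable def rep (f : α → β) (G : SimpleGraph α) (v : α) : α :=
  if h : ∃ w, IsRep f G v w then h.choose else v

lemma isRep_rep (f : α → β) (hv : (cluster G v).Finite) : IsRep f G v (rep f G v) := by
  rw [rep, dif_pos (exists_isRep f hv)]
  exact (exists_isRep f hv).choose_spec

lemma IsRep.rep_eq (hf : Function.Injective f) (h : IsRep f G v w) : rep f G v = w := by
  have hex : ∃ w, IsRep f G v w := ⟨w, h⟩
  rw [rep, dif_pos hex]
  exact hex.choose_spec.eq hf h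

lemma rep_eq_of_reachable (hf : Function.Injective f) (hv : (cluster G v).Finite)
    (h : G.Reachable v v') : rep f G v' = rep f G v :=
  ((isRep_rep f hv).of_reachable h).rep_eq hf

lemma measurable_rep [Countable α] [MeasurableSpace α] [MeasurableSingletonClass α] {Ω : Type*}
    [MeasurableSpace Ω] {G : Ω → SimpleGraph α} (hG : MeasurableGraph G)
    (hf : Function.Injective f) (v : α) : Measurable fun ω => rep f (G ω) v := by
  have hrep (w : α) : Measurable fun ω => IsRep f (G ω) v w :=
    (hG.reachable v w).and (.forall fun u => (hG.reachable v u).imp measurable_const)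
  refine measurable_to_countable' fun w => ?_
  have hiff (ω : Ω) : rep f (G ω) v = w ↔
      IsRep f (G ω) v w ∨ (¬ ∃ u, IsRep f (G ω) v u) ∧ v = w := by
    by_cases h : ∃ u, IsRep f (G ω) v u
    · obtain ⟨u, hu⟩ := h
      rw [hu.rep_eq hf]
      refine ⟨fun huw => .inl (huw ▸ hu), fun hw => ?_⟩
      exact hw.elim (hu.eq hf) fun hw => absurd ⟨u, hu⟩ hw.1
    · rw [rep, dif_neg h]
      exact ⟨fun hvw => .inr ⟨h, hvw⟩, fun hw => hw.elim (fun hw => absurd ⟨w, hw⟩ h) And.right⟩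
  refine measurableSet_setOfPred.2 ?_
  simp only [Set.mem_singleton_iff, hiff]
  exact (hrep w).or ((Measurable.exists hrep).not.and measurable_const)

lemma isRep_apply_iso_iff {α' : Type*} {H : SimpleGraph α'} {f : α' → β} (e : G ≃g H)
    (hfg : ∀ a b, f (e a) ≤ f (e b) ↔ g a ≤ g b) : IsRep f H (e v) (e w) ↔ IsRep g G v w := by
  simp only [IsRep, e.surjective.forall, e.reachable_iff, hfg]

lemma rep_apply_iso {α' : Type*} {H : SimpleGraph α'} {f : α' → β} (hf : Function.Injective f)
    (e : G ≃g H) (hfg : ∀ a b, f (e a) ≤ f (e b) ↔ g a ≤ g b) (v : α) :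
    rep f H (e v) = e (rep g G v) := by
  by_cases hex : ∃ w, IsRep g G v w
  · rw [rep.eq_def g, dif_pos hex]
    exact ((isRep_apply_iso_iff e hfg).2 hex.choose_spec).rep_eq hf
  · have hex' : ¬ ∃ w, IsRep f H (e v) w := by
      simpa only [e.surjective.exists, isRep_apply_iso_iff e hfg] using hex
    rw [rep.eq_def g, dif_neg hex, rep, dif_neg hex']

variable [DecidableEq α]

/-- The permutation exchanging, in each cluster, the minimisers of `f` and of `g`. -/
noncomputable def repSwap (f : α → β) (g : α → γ) (G : SimpleGraph α) (v : α) : α :=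
  Equiv.swap (rep f G v) (rep g G v) v

lemma reachable_repSwap (hv : (cluster G v).Finite) : G.Reachable v (repSwap f g G v) := by
  rw [repSwap, Equiv.swap_apply_def]
  split_ifs
  exacts [(isRep_rep g hv).1, (isRep_rep f hv).1, .rfl]

lemma involutive_repSwap (hf : Function.Injective f) (hg : Function.Injective g)
    (hG : ∀ v, (cluster G v).Finite) : Function.Involutive (repSwap f g G) := fun v => by
  have h := reachable_repSwap (f := f) (g := g) (hG v)
  rw [repSwap, rep_eq_of_reachable hf (hG v) h, rep_eq_of_reachable hg (hG v) h, repSwap,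
    Equiv.swap_apply_self]

lemma repSwap_rep (hf : Function.Injective f) (hg : Function.Injective g)
    (hv : (cluster G v).Finite) : repSwap f g G (rep f G v) = rep g G v := by
  have h := (isRep_rep f hv).1
  rw [repSwap, rep_eq_of_reachable hf hv h, rep_eq_of_reachable hg hv h, Equiv.swap_apply_left]

end Representatives

section ClusterColour

variable {β γ : Type*} [LinearOrder β] [LinearOrder γ] {f : V → β} {g : V → γ} {ω ω' : Bits}
  {ν : Fin 3 → Measure Bool} [∀ k, IsProbabilityMeasure (ν k)]

lemma bond_congr (h : ∀ a, ∀ k ≠ 2, ω (a, k) = ω' (a, k)) : bond ω = bond ω' :=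
  le_antisymm (bond_mono fun a k hk hω => h a k hk ▸ hω)
    (bond_mono fun a k hk hω => (h a k hk).symm ▸ hω)

/-- The colouring of the vertices in which each cluster of open edges takes the colour offered by
its vertex minimising `f`. -/
noncomputable def clusterColour (f : V → β) (ω : Bits) : ColourCfg :=
  fun v => ω (rep f (bond ω) v, 2)

lemma measurable_eval : Measurable fun z : (V × Fin 3) × Bits => z.2 z.1 :=
  measurable_from_prod_countable_right measurable_pi_apply

lemma measurable_clusterColour (hf : Function.Injective f) : Measurable (clusterColour f) :=
  measurable_pi_lambda _ fun v => measurable_eval.comp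
    (((measurable_rep measurableGraph_bond hf v).prodMk measurable_const).prodMk measurable_id)

/-- The edges of the first configuration with the offered colours of the second. -/
def withColours (z : Bits × Bits) : Bits := {i | i.2 ≠ 2}.piecewise z.1 z.2

lemma withColours_two (z : Bits × Bits) (v : V) : withColours z (v, 2) = z.2 (v, 2) := by
  simp [withColours, Set.piecewise]

lemma bond_withColours (z : Bits × Bits) : bond (withColours z) = bond z.1 :=
  bond_congr fun a k hk => by simp [withColours, Set.piecewise, hk]

lemma measurePreserving_withColours :
    MeasurePreserving withColours ((bitsMeasure ν).prod (bitsMeasure ν)) (bitsMeasure ν) :=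
  measurePreserving_set_piecewise _

/-- The offers of the second configuration, permuted so that the minimisers of `f` and `g` in each
cluster of the first one exchange theirs. -/
noncomputable def swapOffers (f : V → β) (g : V → γ) (ω ω' : Bits) : Bits :=
  fun i => ω' (repSwap f g (bond ω) i.1, i.2)

lemma measurable_swapOffers (hf : Function.Injective f) (hg : Function.Injective g) :
    Measurable (Function.uncurry (swapOffers f g)) := by
  have hswap (v : V) : Measurable fun ω => repSwap f g (bond ω) v :=
    (Measurable.of_discrete (f := fun u : V × V => Equiv.swap u.1 u.2 v)).comp
      ((measurable_rep measurableGraph_bond hf v).prodMk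
        (measurable_rep measurableGraph_bond hg v))
  exact measurable_pi_lambda _ fun i => measurable_eval.comp
    ((((hswap i.1).comp measurable_fst).prodMk measurable_const).prodMk measurable_snd)

lemma map_swapOffers (hf : Function.Injective f) (hg : Function.Injective g)
    (hω : ∀ v, (cluster (bond ω) v).Finite) :
    (bitsMeasure ν).map (swapOffers f g ω) = bitsMeasure ν :=
  (measurePreserving_infinitePi_comp (e := fun i => (repSwap f g (bond ω) i.1, i.2))
    ((involutive_repSwap hf hg hω).injective.prodMap Function.injective_id) fun _ => rfl).map_eq

/-- Given the edges, exchanging the offers of two systems of representatives preserves the law of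
the offers. -/
theorem map_clusterColour_eq (hf : Function.Injective f) (hg : Function.Injective g)
    (hfin : ∀ᵐ ω ∂bitsMeasure ν, ∀ v, (cluster (bond ω) v).Finite) :
    (bitsMeasure ν).map (clusterColour f) = (bitsMeasure ν).map (clusterColour g) := by
  have hmix := measurePreserving_withColours (ν := ν)
  have hswap : MeasurePreserving (fun z : Bits × Bits => (z.1, swapOffers f g z.1 z.2))
      ((bitsMeasure ν).prod (bitsMeasure ν)) ((bitsMeasure ν).prod (bitsMeasure ν)) :=
    (MeasurePreserving.id _).skew_product (measurable_swapOffers hf hg)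
      (hfin.mono fun ω hω => map_swapOffers hf hg hω)
  have hrecolour := hmix.comp hswap
  have heq : ∀ᵐ z ∂(bitsMeasure ν).prod (bitsMeasure ν),
      clusterColour f (withColours (z.1, swapOffers f g z.1 z.2)) =
        clusterColour g (withColours z) := by
    filter_upwards [Measure.quasiMeasurePreserving_fst.ae hfin] with z hz
    funext v
    simp only [clusterColour, bond_withColours, withColours_two, swapOffers,
      repSwap_rep hf hg (hz v)]
  calc (bitsMeasure ν).map (clusterColour f)
      = ((bitsMeasure ν).prod (bitsMeasure ν)).map
          fun z => clusterColour f (withColours (z.1, swapOffers f g z.1 z.2)) := by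
        rw [← hrecolour.map_eq,
          Measure.map_map (measurable_clusterColour hf) hrecolour.measurable, hrecolour.map_eq]
        rfl
    _ = ((bitsMeasure ν).prod (bitsMeasure ν)).map fun z => clusterColour g (withColours z) :=
        Measure.map_congr heq
    _ = (bitsMeasure ν).map (clusterColour g) := by
        rw [← Function.comp_def, ← Measure.map_map (measurable_clusterColour hg) hmix.measurable,
          hmix.map_eq]

end ClusterColour

section BlackClusters

variable {α : Type*} {G : SimpleGraph α} {s : Set α} {x y : α} {ξ : ColourCfg}

lemma cluster_eq_cluster_iff : cluster G x = cluster G y ↔ G.Reachable x y :=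
  ⟨fun h => (h.symm ▸ SimpleGraph.Reachable.rfl : y ∈ cluster G x), fun h =>
    Set.ext fun _ => ⟨h.symm.trans, h.trans⟩⟩

lemma encard_image_cluster_eq_one_iff (s : Set α) :
    (cluster G '' s).encard = 1 ↔ (∃ x, x ∈ s) ∧ ∀ x y, x ∈ s → y ∈ s → G.Reachable x y := by
  rw [Set.encard_eq_one, Set.exists_eq_singleton_iff_nonempty_subsingleton, Set.image_nonempty]
  refine and_congr_right fun _ => ⟨fun h x y hx hy => ?_, ?_⟩
  · exact cluster_eq_cluster_iff.1 (h (Set.mem_image_of_mem _ hx) (Set.mem_image_of_mem _ hy))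
  · rintro h _ ⟨x, hx, rfl⟩ _ ⟨y, hy, rfl⟩
    exact cluster_eq_cluster_iff.2 (h x y hx hy)

lemma mem_of_infinite_cluster_restrict (h : (cluster (restrict G s) x).Infinite) : x ∈ s := by
  obtain ⟨y, hxy, hne⟩ := h.exists_notMem_finset {x}
  obtain ⟨p⟩ := hxy
  cases p with
  | nil => simp at hne
  | cons hadj _ => exact hadj.2.1

/-- The subgraph of the square lattice spanned by the black vertices. -/
def blackGraph (ξ : ColourCfg) : SimpleGraph V := restrict lattice {v | ξ v = true}

lemma black_of_infinite_cluster {v : V} (h : (cluster (blackGraph ξ) v).Infinite) : ξ v = true :=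
  mem_of_infinite_cluster_restrict (G := lattice) (s := {v | ξ v = true}) h

lemma measurableGraph_blackGraph : MeasurableGraph blackGraph := by
  have hblack (v : V) : Measurable fun ξ : ColourCfg => ξ v = true :=
    measurableSet_setOfPred.1 (measurableSet_eq_fun (measurable_pi_apply v) measurable_const)
  exact fun a b => measurable_const.and ((hblack a).and (hblack b))

lemma monoCluster_eq_cluster {w : V} (hw : ξ w = true) :
    monoCluster SqAdj ξ true w = cluster (blackGraph ξ) w := by
  ext z
  exact (and_iff_right hw).trans ((blackGraph ξ).reachable_iff_reflTransGen w z).symm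

lemma infinite_monoClusters_eq_image :
    {C : Set V | (∃ w, ξ w = true ∧ C = monoCluster SqAdj ξ true w) ∧ C.Infinite} =
      cluster (blackGraph ξ) '' {x | (cluster (blackGraph ξ) x).Infinite} := by
  ext C
  constructor
  · rintro ⟨⟨w, hw, rfl⟩, hC⟩
    rw [monoCluster_eq_cluster hw] at hC ⊢
    exact ⟨w, hC, rfl⟩
  · rintro ⟨w, hw, rfl⟩
    have hblack : ξ w = true := black_of_infinite_cluster hw
    exact ⟨⟨w, hblack, (monoCluster_eq_cluster hblack).symm⟩, hw⟩

end BlackClusters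

section Merging

variable {α : Type*} {G L : SimpleGraph α} {s F : Set α}

lemma isMerging_restrict_union (hF : ∀ a ∈ F, ∀ b ∈ F, (restrict L F).Reachable a b) :
    IsMerging (restrict L s) (restrict L (s ∪ F)) F where
  le := restrict_mono le_rfl Set.subset_union_left
  restrict_compl_le := by
    rintro a b ⟨⟨hab, ha, hb⟩, haF, hbF⟩
    exact ⟨hab, ha.resolve_right haF, hb.resolve_right hbF⟩
  connected a ha b hb := (hF a ha b hb).mono <| by
    rintro c d ⟨hcd, hc, hd⟩
    exact ⟨⟨hcd, .inr hc, .inr hd⟩, hc, hd⟩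

/-- The union of the connected components that meet `s`. -/
def saturate (G : SimpleGraph α) (s : Set α) : Set α := ⋃ u ∈ s, cluster G u

lemma mem_saturate {v : α} : v ∈ saturate G s ↔ ∃ u ∈ s, G.Reachable u v :=
  Set.mem_iUnion₂.trans (exists_congr fun _ => exists_prop)

lemma subset_saturate : s ⊆ saturate G s := fun v hv => mem_saturate.2 ⟨v, hv, .rfl⟩

lemma restrict_saturate_reachable (hGL : G ≤ L)
    (hs : ∀ a ∈ s, ∀ b ∈ s, (restrict L s).Reachable a b) :
    ∀ a ∈ saturate G s, ∀ b ∈ saturate G s, (restrict L (saturate G s)).Reachable a b := by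
  have hreach {u v : α} (hu : u ∈ s) (huv : G.Reachable u v) :
      (restrict L (saturate G s)).Reachable u v :=
    reachable_of_forall_adj huv fun a b ha hab => ⟨hGL hab, mem_saturate.2 ⟨u, hu, ha⟩,
      mem_saturate.2 ⟨u, hu, ha.trans hab.reachable⟩⟩
  intro a ha b hb
  obtain ⟨u, hu, hua⟩ := mem_saturate.1 ha
  obtain ⟨v, hv, hvb⟩ := mem_saturate.1 hb
  have huv := (hs u hu v hv).mono (restrict_mono le_rfl (subset_saturate (G := G)))
  exact ((hreach hu hua).symm.trans huv).trans (hreach hv hvb)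

variable {β : Type*} [LinearOrder β] {f : V → β} {B : Finset V} {ω : Bits}
  {ν : Fin 3 → Measure Bool} [∀ k, IsProbabilityMeasure (ν k)]

/-- The indices of the bits that colour the clusters of the vertices in `B`. -/
noncomputable def offerIndices (f : V → β) (ω : Bits) (B : Finset V) : Finset (V × Fin 3) :=
  B.image fun v => (rep f (bond ω) v, 2)

/-- The configuration modified so that the clusters of the vertices in `B` become black. -/
noncomputable def blacken (f : V → β) (B : Finset V) (ω : Bits) : Bits :=
  (offerIndices f ω B).piecewise (fun _ => true) ω

lemma bond_blacken : bond (blacken f B ω) = bond ω :=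
  bond_congr fun a k hk => Finset.piecewise_eq_of_notMem _ _ _ fun h => by
    obtain ⟨_, _, h⟩ := Finset.mem_image.1 h
    exact hk (Prod.ext_iff.1 h).2.symm

lemma blacken_eq_true_iff {i : V × Fin 3} :
    blacken f B ω i = true ↔ ω i = true ∨ i ∈ offerIndices f ω B := by
  by_cases hi : i ∈ offerIndices f ω B <;> simp [blacken, Finset.piecewise, hi]

lemma rep_mem_offerIndices_iff (hf : Function.Injective f)
    (hω : ∀ v, (cluster (bond ω) v).Finite) {v : V} :
    (rep f (bond ω) v, 2) ∈ offerIndices f ω B ↔ v ∈ saturate (bond ω) B := by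
  rw [offerIndices, Finset.mem_image, mem_saturate]
  refine exists_congr fun u => and_congr_right fun _ => ⟨fun h => ?_, fun h => ?_⟩
  · have hrep : rep f (bond ω) u = rep f (bond ω) v := (Prod.ext_iff.1 h).1
    have hu := (isRep_rep f (hω u)).1
    rw [hrep] at hu
    exact hu.trans (isRep_rep f (hω v)).1.symm
  · rw [rep_eq_of_reachable hf (hω u) h]

lemma isMerging_blacken (hf : Function.Injective f) (hω : ∀ v, (cluster (bond ω) v).Finite)
    (n : ℕ) : IsMerging (blackGraph (clusterColour f ω))
      (blackGraph (clusterColour f (blacken f (box n) ω))) (saturate (bond ω) (box n)) := by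
  have hblack : {v | clusterColour f (blacken f (box n) ω) v = true} =
      {v | clusterColour f ω v = true} ∪ saturate (bond ω) (box n) := by
    ext v
    rw [Set.mem_union, ← rep_mem_offerIndices_iff hf hω]
    change blacken f (box n) ω (rep f (bond (blacken f (box n) ω)) v, 2) = true ↔ _
    rw [bond_blacken, blacken_eq_true_iff]
    rfl
  rw [blackGraph, blackGraph, hblack]
  refine isMerging_restrict_union (restrict_saturate_reachable (bond_le_lattice ω) ?_)
  exact fun a ha b hb => restrict_box_reachable (fun c _ _ => sqAdj_iff.2 (.inl rfl))
    (fun c _ _ => sqAdj_iff.2 (.inr (.inr (.inl rfl)))) ha hb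

/-- Translation by `u` as an isomorphism of bond configurations. -/
def translateBond (u : V) (ω : Bits) : bond (u +ᵥ ω) ≃g bond ω where
  toEquiv := Equiv.addRight u
  map_rel_iff' := (bond_vadd_adj u ω _ _).symm

lemma clusterColour_vadd (hf : Function.Injective f)
    (hadd : ∀ u a b, f (a + u) ≤ f (b + u) ↔ f a ≤ f b) (u : V) (ω : Bits) (a : V) :
    clusterColour f (u +ᵥ ω) a = clusterColour f ω (a + u) := by
  change ω (rep f (bond (u +ᵥ ω)) a + u, 2) = ω (rep f (bond ω) (a + u), 2)
  exact congrArg (fun w => ω (w, 2)) (rep_apply_iso hf (translateBond u ω) (hadd u) a).symm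

lemma isBurtonKeane_blackGraph (hf : Function.Injective f)
    (hadd : ∀ u a b, f (a + u) ≤ f (b + u) ↔ f a ≤ f b) (hν : ν 2 {true} ≠ 0)
    (hfin : ∀ᵐ ω ∂bitsMeasure ν, ∀ v, (cluster (bond ω) v).Finite) :
    IsBurtonKeane (bitsMeasure ν) fun ω => blackGraph (clusterColour f ω) where
  le_lattice _ := restrict_le
  measurable a b := (measurableGraph_blackGraph a b).comp (measurable_clusterColour hf)
  adj_vadd u ω a b := by
    change SqAdj a b ∧ clusterColour f (u +ᵥ ω) a = true ∧ clusterColour f (u +ᵥ ω) b = true ↔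
      SqAdj (a + u) (b + u) ∧ _ ∧ _
    rw [clusterColour_vadd hf hadd, clusterColour_vadd hf hadd]
    simp only [SqAdj, Prod.fst_add, Prod.snd_add, add_sub_add_right_eq_sub]
    rfl
  merging Q hQ := by
    filter_upwards [ae_forall_piecewise hQ fun _ => true, hfin] with ω hω hfin n
    have hF : (saturate (bond ω) (box n)).Finite := (box n).finite_toSet.biUnion fun u _ => hfin u
    refine ⟨blacken f (box n) ω, hF.toFinset, hω _ fun i hi => ?_, ?_, ?_⟩
    · obtain ⟨v, _, rfl⟩ := Finset.mem_image.1 hi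
      exact hν
    · exact fun v hv => hF.mem_toFinset.2 (subset_saturate hv)
    · rw [hF.coe_toFinset]
      exact isMerging_blacken hf hfin n

end Merging

section Model

variable {p r x : ℝ} {a b v : V}

lemma conn_iff_reachable :
    Conn (edgeCfg SqAdj p x) a b ↔ (bond (sampleBits p r x)).Reachable a b := by
  rw [SimpleGraph.reachable_iff_reflTransGen, Conn]
  simp only [edgeCfg_eq_true_iff (r := r)]

lemma isRep_clusterRep : IsRep Encodable.encode (bond (sampleBits p r x)) v
    (clusterRep (edgeCfg SqAdj p x) v) := by
  have hne : (Encodable.encode '' pCluster (edgeCfg SqAdj p x) v).Nonempty :=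
    ⟨_, v, Relation.ReflTransGen.refl, rfl⟩
  obtain ⟨w, hw, hmin⟩ := Nat.sInf_mem hne
  have hrep : clusterRep (edgeCfg SqAdj p x) v = w := by
    rw [clusterRep, ← hmin, Encodable.encodek, Option.getD_some]
  rw [hrep]
  refine ⟨conn_iff_reachable.1 hw, fun u hu => ?_⟩
  rw [hmin]
  exact Nat.sInf_le ⟨u, conn_iff_reachable.2 hu, rfl⟩

lemma colourCfg_eq_clusterColour :
    colourCfg SqAdj p r x = clusterColour Encodable.encode (sampleBits p r x) := by
  funext v
  rw [Bool.eq_iff_iff, clusterColour, colourCfg, boolOf_iff, sampleBits_two,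
    isRep_clusterRep.rep_eq Encodable.encode_injective]

lemma measurable_edgeCfg (p : ℝ) : Measurable (edgeCfg SqAdj p) := by
  refine measurable_pi_lambda _ fun a => measurable_pi_lambda _ fun b => measurable_to_bool ?_
  refine measurableSet_setOfPred.2 ?_
  simp only [Set.mem_singleton_iff, edgeCfg_eq_true_iff (r := p)]
  exact (measurableGraph_bond a b).comp (measurePreserving_sampleBits p p).measurable

lemma ae_finite_cluster_bond (hp : p ≤ 1 / 2) (r : ℝ) :
    ∀ᵐ ω ∂bitsMeasure (bitLaw p r), ∀ v, (cluster (bond ω) v).Finite := by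
  filter_upwards [ae_not_exists_infinite_cluster_bond hp r] with ω hω v
  exact Set.not_infinite.1 fun hv => hω ⟨v, hv⟩

/-- Each cluster of open edges takes the colour offered by its lexicographically smallest vertex,
a choice which commutes with translations. -/
noncomputable abbrev lexColour : Bits → ColourCfg := clusterColour (toLex : V → ℤ ×ₗ ℤ)

lemma dacMeasure_colour_eq (hp : p ≤ 1 / 2) (r : ℝ) {Q : ColourCfg → Prop} (hQ : Measurable Q) :
    DaCMeasure SqAdj p r {ω | Q ω.2} = bitsMeasure (bitLaw p r) {ω | Q (lexColour ω)} := by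
  have hQ' : MeasurableSet {ξ | Q ξ} := measurableSet_setOfPred.2 hQ
  have hsample := measurePreserving_sampleBits p r
  have hencode := measurable_clusterColour (Encodable.encode_injective (α := V))
  have hlex := measurable_clusterColour (f := (toLex : V → ℤ ×ₗ ℤ)) toLex.injective
  have hcolour : colourCfg SqAdj p r = clusterColour Encodable.encode ∘ sampleBits p r :=
    funext fun _ => colourCfg_eq_clusterColour
  have hmeas : Measurable (colourCfg SqAdj p r) := hcolour ▸ hencode.comp hsample.measurable
  have hset : MeasurableSet {ω : Config | Q ω.2} := measurable_snd hQ'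
  calc DaCMeasure SqAdj p r {ω | Q ω.2} = base.map (colourCfg SqAdj p r) {ξ | Q ξ} := by
        rw [DaCMeasure, Measure.map_apply ((measurable_edgeCfg p).prodMk hmeas) hset,
          Measure.map_apply hmeas hQ']
        rfl
    _ = (bitsMeasure (bitLaw p r)).map lexColour {ξ | Q ξ} := by
        rw [hcolour, ← Measure.map_map hencode hsample.measurable, hsample.map_eq,
          map_clusterColour_eq Encodable.encode_injective toLex.injective
            (ae_finite_cluster_bond hp r)]
    _ = bitsMeasure (bitLaw p r) {ω | Q (lexColour ω)} := Measure.map_apply hlex hQ'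

lemma isBurtonKeane_lexColour (hp : p ≤ 1 / 2) (hr : bitLaw p r 2 {true} ≠ 0) :
    IsBurtonKeane (bitsMeasure (bitLaw p r)) fun ω => blackGraph (lexColour ω) :=
  isBurtonKeane_blackGraph toLex.injective
    (fun u a b => by simp [Prod.Lex.toLex_le_toLex]) hr (ae_finite_cluster_bond hp r)

lemma thetaSq_eq_zero (hp : p ≤ 1 / 2) (h : ∀ᵐ ω ∂bitsMeasure (bitLaw p r),
    ¬ ∃ x, (cluster (blackGraph (lexColour ω)) x).Infinite) : thetaSq p r = 0 := by
  have hnull : DaCMeasure SqAdj p r {ω | ∃ x, (cluster (blackGraph ω.2) x).Infinite} = 0 := by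
    rw [dacMeasure_colour_eq hp r (.exists measurableGraph_blackGraph.infinite_cluster)]
    simpa only [ae_iff, not_not] using h
  refine measure_mono_null (fun ω hω => ?_) hnull
  have hinf : (monoCluster SqAdj ω.2 true origin).Infinite := hω
  obtain ⟨w, hblack, -⟩ := hinf.nonempty
  exact ⟨origin, monoCluster_eq_cluster hblack ▸ hinf⟩

lemma bitLaw_two_ne_zero (hp : p ≤ 1 / 2) (h : thetaSq p r ≠ 0) : bitLaw p r 2 {true} ≠ 0 := by
  refine fun hzero => h (thetaSq_eq_zero hp ?_)
  have hwhite : ∀ᵐ ω ∂bitsMeasure (bitLaw p r), ∀ w : V, ω (w, 2) ≠ true := by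
    refine ae_all_iff.2 fun w => ?_
    have heval := measurePreserving_eval_infinitePi (fun i : V × Fin 3 => bitLaw p r i.2) (w, 2)
    exact heval.quasiMeasurePreserving.ae (measure_eq_zero_iff_ae_notMem.1 hzero)
  filter_upwards [hwhite] with ω hω ⟨x, hx⟩
  exact hω _ (black_of_infinite_cluster hx)

lemma thetaSq_ne_zero (hr : rcSq p < r) (hr1 : r ≤ 1) : thetaSq p r ≠ 0 := fun h => by
  have hbdd : BddAbove {r : ℝ | r ∈ Set.Icc (0 : ℝ) 1 ∧ thetaSq p r = 0} :=
    ⟨1, fun _ hs => hs.1.2⟩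
  have hnonneg : 0 ≤ rcSq p := Real.sSup_nonneg fun _ hs => hs.1.1
  exact hr.not_ge (le_csSup hbdd ⟨⟨hnonneg.trans hr.le, hr1⟩, h⟩)

theorem unique_infinite_black_cluster_general (hp : p ≤ 1 / 2) (hθ : thetaSq p r ≠ 0) :
    DaCMeasure SqAdj p r
      {ω : Config |
        {C : Set V | (∃ w : V, ω.2 w = true ∧ C = monoCluster SqAdj ω.2 true w) ∧
          C.Infinite}.encard = 1} = 1 := by
  have hBK := isBurtonKeane_lexColour hp (bitLaw_two_ne_zero hp hθ)
  have hexists := hBK.ae_exists_infinite_or_ae_not.resolve_right fun h => hθ (thetaSq_eq_zero hp h)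
  have hinfinite := measurableGraph_blackGraph.infinite_cluster
  simp only [infinite_monoClusters_eq_image, encard_image_cluster_eq_one_iff, Set.mem_ofPred_eq]
  rw [dacMeasure_colour_eq hp r (Q := fun ξ => (∃ x, _) ∧ ∀ x y, _ → _ → _)
    ((Measurable.exists hinfinite).and (.forall fun x => .forall fun y => (hinfinite x).imp
      ((hinfinite y).imp (measurableGraph_blackGraph.reachable x y))))]
  have hunique := hexists.and hBK.ae_unique
  exact (measure_congr (Filter.eventuallyEq_univ.2 hunique)).trans measure_univ

end Model

/-- **Uniqueness of the infinite cluster.** For `p < 1/2` and `r > r_c(p)`,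
the number of infinite black `r`-clusters is `ℙ_{p,r}`-a.s. equal to `1`. -/
theorem unique_infinite_black_cluster (p r : ℝ) (hp0 : 0 ≤ p) (hp : p < 1 / 2)
    (hr : rcSq p < r) (hr1 : r ≤ 1) :
    DaCMeasure SqAdj p r
      {ω : Config |
        {C : Set V | (∃ w : V, ω.2 w = true ∧ C = monoCluster SqAdj ω.2 true w) ∧
          C.Infinite}.encard = 1} = 1 :=
  unique_infinite_black_cluster_general hp.le (thetaSq_ne_zero hr hr1)

end DaC
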